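/- Let ℳ be a bounded cyclic module over F₂ (HH_n(ℳ) = 0 for all but finitely many n), and suppose that the Hodge-to-de Rham spectral sequence for ℳ degenerates at the first page. Let Π(ℳ) be the complex with Π_n(ℳ) = ⊕_{p=0}^{n} HC_{n+1}(ℳ) and its differential ∂_Π, equipped with the involution τ(x_0,…,x_n) = (t_{n+1}x_n, t²_{n+1}x_{n−1}, …, t^{n+1}_{n+1}x_0). Then the spectral sequence ^{vh}E (first taking homology with respect to ∂_Π) attached to each of the bicomplexes Π^{ℤ/2} (the first-quadrant bicomplex with columns Π_*(ℳ) and horizontal differential 1+τ) and Π^{Tate} (its ℤ-periodic version) also degenerates at the first page. -/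

import Mathlib

noncomputable section
open TensorProduct

namespace LT

/-- A differential graded (dg) algebra over a commutative ring `k`: a chain complex with a
degree `-1` differential together with an associative unital multiplication satisfying the
(signed) Leibniz rule; over `𝔽₂` the signs are invisible. The grading is given by an internal
direct sum decomposition into submodules. -/
structure DGA (k : Type) [CommRing k] : Type 1 where
  V : Type
  [acg : AddCommGroup V]
  [mod : Module k V]
  gr : ℤ → Submodule k V
  internal : DirectSum.IsInternal gr
  d : V →ₗ[k] V
  d_d : ∀ x, d (d x) = 0
  d_gr : ∀ i, ∀ x ∈ gr i, d x ∈ gr (i - 1)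
  mul : V →ₗ[k] V →ₗ[k] V
  mul_assoc' : ∀ x y z, mul (mul x y) z = mul x (mul y z)
  one : V
  one_gr : one ∈ gr 0
  one_mul' : ∀ x, mul one x = x
  mul_one' : ∀ x, mul x one = x
  mul_gr : ∀ i j, ∀ x ∈ gr i, ∀ y ∈ gr j, mul x y ∈ gr (i + j)
  leibniz : ∀ i, ∀ x ∈ gr i, ∀ y, d (mul x y) = mul (d x) y + (Int.negOnePow i : ℤ) • mul x (d y)

attribute [instance] DGA.acg
attribute [instance 2000] DGA.mod

variable {k : Type} [CommRing k]

/-- A dg `(A,A)`-bimodule over a dg algebra `A`. -/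
structure DGBimod (A : DGA k) : Type 1 where
  V : Type
  [acg : AddCommGroup V]
  [mod : Module k V]
  gr : ℤ → Submodule k V
  internal : DirectSum.IsInternal gr
  d : V →ₗ[k] V
  d_d : ∀ x, d (d x) = 0
  d_gr : ∀ i, ∀ x ∈ gr i, d x ∈ gr (i - 1)
  actL : A.V →ₗ[k] V →ₗ[k] V
  actR : V →ₗ[k] A.V →ₗ[k] V
  actL_one : ∀ m, actL A.one m = m
  actR_one : ∀ m, actR m A.one = m
  actL_mul : ∀ a b m, actL (A.mul a b) m = actL a (actL b m)
  actR_mul : ∀ m a b, actR (actR m a) b = actR m (A.mul a b)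
  actLR : ∀ a m b, actR (actL a m) b = actL a (actR m b)
  actL_gr : ∀ i j, ∀ a ∈ A.gr i, ∀ m ∈ gr j, actL a m ∈ gr (i + j)
  actR_gr : ∀ i j, ∀ m ∈ gr i, ∀ a ∈ A.gr j, actR m a ∈ gr (i + j)
  leibnizL : ∀ i, ∀ a ∈ A.gr i, ∀ m, d (actL a m) = actL (A.d a) m + (Int.negOnePow i : ℤ) • actL a (d m)
  leibnizR : ∀ j, ∀ m ∈ gr j, ∀ a, d (actR m a) = actR (d m) a + (Int.negOnePow j : ℤ) • actR m (A.d a)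

attribute [instance] DGBimod.acg
attribute [instance 2000] DGBimod.mod

/-- The diagonal bimodule: `A` viewed as a bimodule over itself. -/
def DGA.diag (A : DGA k) : DGBimod A where
  V := A.V
  gr := A.gr
  internal := A.internal
  d := A.d
  d_d := A.d_d
  d_gr := A.d_gr
  actL := A.mul
  actR := A.mul
  actL_one := A.one_mul'
  actR_one := A.mul_one'
  actL_mul := fun a b m => A.mul_assoc' a b m
  actR_mul := fun m a b => A.mul_assoc' m a b
  actLR := fun a m b => A.mul_assoc' a m b
  actL_gr := A.mul_gr
  actR_gr := A.mul_gr
  leibnizL := A.leibniz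
  leibnizR := A.leibniz

variable {A : DGA k}

/-- A homomorphism of dg bimodules of degree `s`: a linear map raising degree by `s`,
commuting with the differentials and the two actions. -/
def IsBHom (M N : DGBimod A) (s : ℤ) (f : M.V →ₗ[k] N.V) : Prop :=
  (∀ i, ∀ x ∈ M.gr i, f x ∈ N.gr (i + s)) ∧
  (∀ x, f (M.d x) = N.d (f x)) ∧
  (∀ a m, f (M.actL a m) = N.actL a (f m)) ∧
  (∀ m a, f (M.actR m a) = N.actR (f m) a)

/-- Graded maps of degree `s` compatible with the bimodule actions (no compatibility with the
differential required); these are used as homotopies. -/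
def grHomSub (M N : DGBimod A) (s : ℤ) : Submodule k (M.V →ₗ[k] N.V) where
  carrier := {f | (∀ i, ∀ x ∈ M.gr i, f x ∈ N.gr (i + s)) ∧
    (∀ a m, f (M.actL a m) = N.actL a (f m)) ∧
    (∀ m a, f (M.actR m a) = N.actR (f m) a)}
  add_mem' := by
    rintro f g ⟨hf1, hf2, hf3⟩ ⟨hg1, hg2, hg3⟩
    refine ⟨fun i x hx => ?_, fun a m => ?_, fun m a => ?_⟩ <;>
      simp [LinearMap.add_apply, hf2, hg2, hf3, hg3]
    exact Submodule.add_mem _ (hf1 i x hx) (hg1 i x hx)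
  zero_mem' := by
    refine ⟨fun i x hx => ?_, fun a m => ?_, fun m a => ?_⟩ <;> simp
  smul_mem' := by
    rintro c f ⟨hf1, hf2, hf3⟩
    refine ⟨fun i x hx => ?_, fun a m => ?_, fun m a => ?_⟩ <;>
      simp [LinearMap.smul_apply, hf2, hf3]
    exact Submodule.smul_mem _ _ (hf1 i x hx)

/-- Bimodule chain maps of degree `s`, as a submodule of all linear maps. -/
def bcmSub (M N : DGBimod A) (s : ℤ) : Submodule k (M.V →ₗ[k] N.V) where
  carrier := {f | IsBHom M N s f}
  add_mem' := by
    rintro f g ⟨hf1, hf0, hf2, hf3⟩ ⟨hg1, hg0, hg2, hg3⟩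
    refine ⟨fun i x hx => ?_, fun x => ?_, fun a m => ?_, fun m a => ?_⟩ <;>
      simp [LinearMap.add_apply, hf0, hg0, hf2, hg2, hf3, hg3]
    exact Submodule.add_mem _ (hf1 i x hx) (hg1 i x hx)
  zero_mem' := by
    refine ⟨fun i x hx => ?_, fun x => ?_, fun a m => ?_, fun m a => ?_⟩ <;> simp
  smul_mem' := by
    rintro c f ⟨hf1, hf0, hf2, hf3⟩
    refine ⟨fun i x hx => ?_, fun x => ?_, fun a m => ?_, fun m a => ?_⟩ <;>
      simp [LinearMap.smul_apply, hf0, hf2, hf3]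
    exact Submodule.smul_mem _ _ (hf1 i x hx)

/-- The nullhomotopic degree-`s` maps `d ∘ h + h ∘ d` for `h` a degree `s+1` bimodule map. -/
def nullHtpSub (M N : DGBimod A) (s : ℤ) : Submodule k (M.V →ₗ[k] N.V) :=
  Submodule.map
    ((LinearMap.llcomp k M.V N.V N.V N.d) + (LinearMap.lcomp k N.V M.d))
    (grHomSub M N (s + 1))

/-- Homotopy classes of degree-`s` bimodule chain maps `M → N`; for `M` a cell retract this
computes morphisms `Σ^s M → N` in the derived category of dg bimodules. -/
def HtpyHom (M N : DGBimod A) (s : ℤ) :=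
  bcmSub M N s ⧸ Submodule.comap (bcmSub M N s).subtype (nullHtpSub M N s)

instance (M N : DGBimod A) (s : ℤ) : AddCommGroup (HtpyHom M N s) :=
  inferInstanceAs (AddCommGroup (_ ⧸ _))
instance (M N : DGBimod A) (s : ℤ) : Module k (HtpyHom M N s) :=
  inferInstanceAs (Module k (_ ⧸ _))


/-- Homology in degree `n` of a graded module with "relations": the degree-`n` part of the
homology of the quotient complex `(T/N, d)` where the grading of `T/N` is induced by `gr`.
Taking `N = ⊥` gives ordinary graded homology. -/
def Hgr (T : Type) [AddCommGroup T] [Module k T] (gr : ℤ → Submodule k T)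
    (N : Submodule k T) (d : T →ₗ[k] T) (n : ℤ) : Type :=
  ↥((gr n ⊔ N) ⊓ Submodule.comap d N) ⧸
    Submodule.comap ((gr n ⊔ N) ⊓ Submodule.comap d N).subtype
      (Submodule.map d (gr (n + 1) ⊔ N) ⊔ N)

instance (T : Type) [AddCommGroup T] [Module k T] (gr : ℤ → Submodule k T)
    (N : Submodule k T) (d : T →ₗ[k] T) (n : ℤ) : AddCommGroup (Hgr T gr N d n) :=
  inferInstanceAs (AddCommGroup (_ ⧸ _))
instance (T : Type) [AddCommGroup T] [Module k T] (gr : ℤ → Submodule k T)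
    (N : Submodule k T) (d : T →ₗ[k] T) (n : ℤ) : Module k (Hgr T gr N d n) :=
  inferInstanceAs (Module k (_ ⧸ _))

/-- `f` induces an isomorphism on (graded) homology, with a degree shift `s`; stated
elementarily: the induced map on homology classes is surjective and injective. -/
def IsQIsoDeg (T S : Type) [AddCommGroup T] [Module k T] [AddCommGroup S] [Module k S]
    (grT : ℤ → Submodule k T) (grS : ℤ → Submodule k S)
    (dT : T →ₗ[k] T) (dS : S →ₗ[k] S) (s : ℤ) (f : T →ₗ[k] S) : Prop :=
  ∀ n : ℤ,
    (∀ y ∈ grS (n + s), dS y = 0 →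
      ∃ x ∈ grT n, dT x = 0 ∧ f x - y ∈ Submodule.map dS (grS (n + s + 1))) ∧
    (∀ x ∈ grT n, dT x = 0 → f x ∈ Submodule.map dS (grS (n + s + 1)) →
      x ∈ Submodule.map dT (grT (n + 1)))

variable {A : DGA k}

/-- The bilinear "sandwich" map `(a, b) ↦ a · m · b` for a fixed element `m` of a bimodule. -/
def sandwich (M : DGBimod A) (m : M.V) : A.V →ₗ[k] A.V →ₗ[k] M.V :=
  LinearMap.mk₂ k (fun a b => M.actR (M.actL a m) b)
    (fun a₁ a₂ b => by simp)
    (fun c a b => by simp)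
    (fun a b₁ b₂ => by simp)
    (fun c a b => by simp)

/-- The bimodule map `A ⊗ A → M`, `a ⊗ b ↦ a · m · b`. -/
def sandwichT (M : DGBimod A) (m : M.V) : (A.V ⊗[k] A.V) →ₗ[k] M.V :=
  TensorProduct.lift (sandwich M m)

/-- `S'/S` is a free dg bimodule: there is a family of "generators" `g i` of degrees `deg i`,
closed cycles modulo `S`, which generate `S'` freely over `A ⊗ A` modulo `S`. -/
def IsFreeStep (M : DGBimod A) (S S' : Submodule k M.V) : Prop :=
  ∃ (I : Type) (g : I → M.V) (deg : I → ℤ),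
    (∀ i, g i ∈ S') ∧ (∀ i, M.d (g i) ∈ S) ∧
    (∀ i p q, ∀ a ∈ A.gr p, ∀ b ∈ A.gr q, M.actR (M.actL a (g i)) b ∈ M.gr (p + q + deg i)) ∧
    S' ≤ S ⊔ (⨆ i, LinearMap.range (sandwichT M (g i))) ∧
    (∀ (u : Finset I) (c : I → A.V ⊗[k] A.V),
      (∑ i ∈ u, sandwichT M (g i) (c i)) ∈ S → ∀ i ∈ u, c i = 0)

/-- As `IsFreeStep`, with a finite generating family. -/
def IsFreeStepFin (M : DGBimod A) (S S' : Submodule k M.V) : Prop :=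
  ∃ (I : Type) (_ : Finite I) (g : I → M.V) (deg : I → ℤ),
    (∀ i, g i ∈ S') ∧ (∀ i, M.d (g i) ∈ S) ∧
    (∀ i p q, ∀ a ∈ A.gr p, ∀ b ∈ A.gr q, M.actR (M.actL a (g i)) b ∈ M.gr (p + q + deg i)) ∧
    S' ≤ S ⊔ (⨆ i, LinearMap.range (sandwichT M (g i))) ∧
    (∀ (u : Finset I) (c : I → A.V ⊗[k] A.V),
      (∑ i ∈ u, sandwichT M (g i) (c i)) ∈ S → ∀ i ∈ u, c i = 0)

/-- A filtration exhibiting `M` as a cell bimodule. -/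
def IsCellFiltration (M : DGBimod A) (Fil : ℕ → Submodule k M.V) : Prop :=
  Fil 0 = ⊥ ∧ Monotone Fil ∧ (⨆ n, Fil n) = ⊤ ∧
  (∀ n, ∀ x ∈ Fil n, M.d x ∈ Fil n) ∧
  (∀ n a, ∀ x ∈ Fil n, M.actL a x ∈ Fil n) ∧
  (∀ n a, ∀ x ∈ Fil n, M.actR x a ∈ Fil n) ∧
  (∀ n, IsFreeStep M (Fil n) (Fil (n + 1)))

/-- A cell bimodule: admits a filtration with free subquotients. -/
def IsCellBimod (M : DGBimod A) : Prop := ∃ Fil, IsCellFiltration M Fil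

/-- A finite cell bimodule: a finite filtration with finite-rank free subquotients. -/
def IsFiniteCellBimod (M : DGBimod A) : Prop :=
  ∃ Fil, (Fil 0 = ⊥ ∧ Monotone Fil ∧ (⨆ n, Fil n) = ⊤ ∧
    (∀ n, ∀ x ∈ Fil n, M.d x ∈ Fil n) ∧
    (∀ n a, ∀ x ∈ Fil n, M.actL a x ∈ Fil n) ∧
    (∀ n a, ∀ x ∈ Fil n, M.actR x a ∈ Fil n) ∧
    (∀ n, IsFreeStepFin M (Fil n) (Fil (n + 1)))) ∧ (∃ n₀, Fil n₀ = ⊤)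

/-- A (finite) cell retract: a subcomplex of a (finite) cell bimodule whose inclusion admits
a bimodule retraction. -/
def IsCellRetract (P : DGBimod A) : Prop :=
  ∃ (C : DGBimod A), IsCellBimod C ∧
    ∃ (ι : P.V →ₗ[k] C.V) (r : C.V →ₗ[k] P.V),
      IsBHom P C 0 ι ∧ IsBHom C P 0 r ∧ Function.Injective ι ∧ r.comp ι = LinearMap.id

def IsFiniteCellRetract (P : DGBimod A) : Prop :=
  ∃ (C : DGBimod A), IsFiniteCellBimod C ∧
    ∃ (ι : P.V →ₗ[k] C.V) (r : C.V →ₗ[k] P.V),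
      IsBHom P C 0 ι ∧ IsBHom C P 0 r ∧ Function.Injective ι ∧ r.comp ι = LinearMap.id

/-- `ρ : R → M` is a resolution: a quasi-isomorphism of dg bimodules from a cell retract. -/
def IsResolution (R M : DGBimod A) (ρ : R.V →ₗ[k] M.V) : Prop :=
  IsCellRetract R ∧ IsBHom R M 0 ρ ∧ IsQIsoDeg R.V M.V R.gr M.gr R.d M.d 0 ρ

/-- A bimodule is perfect if it admits a resolution by a finite cell retract. -/
def IsPerfect (M : DGBimod A) : Prop :=
  ∃ (R : DGBimod A) (ρ : R.V →ₗ[k] M.V),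
    IsFiniteCellRetract R ∧ IsBHom R M 0 ρ ∧ IsQIsoDeg R.V M.V R.gr M.gr R.d M.d 0 ρ

/-- `A` is homologically smooth: perfect as a bimodule over itself. -/
def HomSmooth (A : DGA k) : Prop := IsPerfect A.diag

/-- The homology of the dg algebra `A` in degree `n`. -/
abbrev AlgH (A : DGA k) (n : ℤ) := Hgr A.V A.gr ⊥ A.d n

/-- `A` is homologically proper: its total homology is finitely generated. -/
def HomProper (A : DGA k) : Prop :=
  (∀ n, Module.Finite k (AlgH A n)) ∧ (Set.Finite {n : ℤ | Nontrivial (AlgH A n)})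

/-- A dg bimodule is bounded if it is supported in finitely many gradings. -/
def BoundedBimod (M : DGBimod A) : Prop := ∃ u : Finset ℤ, ∀ i ∉ u, M.gr i = ⊥

/-! ### Bicomplexes and the spectral sequences of their two filtrations -/

/-- A bicomplex of `k`-modules "with relations", presented as one ambient module with a
bigrading by submodules, a horizontal differential `dh` (of bidegree `(-1,0)`), a vertical
differential `dv` (of bidegree `(0,-1)`) and a submodule `N` of relations (so that the actual
bicomplex is the quotient by `N`; take `N = ⊥` for an honest bicomplex). -/
structure RelBicx (k : Type) [CommRing k] : Type 1 where
  T : Type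
  [acg : AddCommGroup T]
  [mod : Module k T]
  gr : ℤ → ℤ → Submodule k T
  N : Submodule k T
  dh : T →ₗ[k] T
  dv : T →ₗ[k] T

attribute [instance] RelBicx.acg RelBicx.mod

namespace RelBicx

variable {k : Type} [CommRing k] (B : RelBicx k)

/-- The total differential. -/
def D : B.T →ₗ[k] B.T := B.dh + B.dv

/-- The column filtration (by the first index `p`) of the total complex, in total degree `n`. -/
def Fcol (p n : ℤ) : Submodule k B.T := ⨆ (i : ℤ) (_ : i ≤ p), B.gr i (n - i)

/-- The row filtration (by the second index `q`) of the total complex, in total degree `n`. -/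
def Frow (q n : ℤ) : Submodule k B.T := ⨆ (j : ℤ) (_ : j ≤ q), B.gr (n - j) j

/-- Approximate cycles for the spectral sequence of the filtration `F`:
elements of filtration `p` (mod `N`) whose total differential drops filtration by `r`. -/
def Zpage (F : ℤ → ℤ → Submodule k B.T) (r p n : ℤ) : Submodule k B.T :=
  (F p n ⊔ B.N) ⊓ Submodule.comap B.D (F (p - r) (n - 1) ⊔ B.N)

/-- The boundaries subobject for the `r`-th page at filtration `p`, total degree `n`. -/
def Bpage (F : ℤ → ℤ → Submodule k B.T) (r p n : ℤ) : Submodule k B.T :=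
  Submodule.map B.D (B.Zpage F (r - 1) (p + r - 1) (n + 1)) ⊔ B.Zpage F (r - 1) (p - 1) n ⊔ B.N

/-- The `r`-th page of the spectral sequence of the filtration `F`, at filtration degree `p`
and total degree `n` (the classical subquotient description `Z^r/B^r`). -/
def Epage (F : ℤ → ℤ → Submodule k B.T) (r p n : ℤ) : Type :=
  ↥(B.Zpage F r p n) ⧸
    Submodule.comap (B.Zpage F r p n).subtype (B.Bpage F r p n)

instance (F : ℤ → ℤ → Submodule k B.T) (r p n : ℤ) : AddCommGroup (B.Epage F r p n) :=
  inferInstanceAs (AddCommGroup (_ ⧸ _))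
instance (F : ℤ → ℤ → Submodule k B.T) (r p n : ℤ) : Module k (B.Epage F r p n) :=
  inferInstanceAs (Module k (_ ⧸ _))

/-- The spectral sequence `ᵛʰE` (filtration by columns; one first takes homology with respect
to the vertical differential). Indexing: `vhE r p q` is `ᵛʰE^r_{p,q}`. -/
def vhE (r p q : ℤ) : Type := B.Epage B.Fcol r p (p + q)

/-- The spectral sequence `ʰᵛE` (filtration by rows; one first takes homology with respect to
the horizontal differential), in the transposed indexing of Lipshitz–Treumann:
`hvE r p q` is `ʰᵛE^r_{p,q}`, whose filtration index is the row `q`. -/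
def hvE (r p q : ℤ) : Type := B.Epage B.Frow r q (p + q)

instance (r p q : ℤ) : AddCommGroup (B.vhE r p q) := inferInstanceAs (AddCommGroup (Epage _ _ _ _ _))
instance (r p q : ℤ) : Module k (B.vhE r p q) := inferInstanceAs (Module k (Epage _ _ _ _ _))
instance (r p q : ℤ) : AddCommGroup (B.hvE r p q) := inferInstanceAs (AddCommGroup (Epage _ _ _ _ _))
instance (r p q : ℤ) : Module k (B.hvE r p q) := inferInstanceAs (Module k (Epage _ _ _ _ _))

/-- Vanishing of the differential leaving the `r`-th page at position `(p, n)`: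
the total differential of any approximate cycle is, up to boundaries of earlier pages and
relations, an approximate cycle of deeper filtration. -/
def zeroDiff (F : ℤ → ℤ → Submodule k B.T) (r p n : ℤ) : Prop :=
  Submodule.map B.D (B.Zpage F r p n) ≤
    Submodule.map B.D (B.Zpage F (r - 1) (p - 1) n) ⊔ B.Zpage F (r - 1) (p - r - 1) (n - 1) ⊔ B.N

/-- The spectral sequence of the filtration `F` collapses at the `r₀`-th page. -/
def collapsesAt (F : ℤ → ℤ → Submodule k B.T) (r₀ : ℤ) : Prop :=
  ∀ r : ℤ, r₀ ≤ r → ∀ p n : ℤ, B.zeroDiff F r p n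

/-- The part of total degree `n` of the bicomplex. -/
def totGr (n : ℤ) : Submodule k B.T := ⨆ p : ℤ, B.gr p (n - p)

/-- The degree-`n` homology of the total complex (of the quotient by `N`). -/
def Htot (n : ℤ) : Type :=
  ↥((B.totGr n ⊔ B.N) ⊓ Submodule.comap B.D B.N) ⧸
    Submodule.comap ((B.totGr n ⊔ B.N) ⊓ Submodule.comap B.D B.N).subtype
      (Submodule.map B.D (B.totGr (n + 1) ⊔ B.N) ⊔ B.N)

instance (n : ℤ) : AddCommGroup (B.Htot n) := inferInstanceAs (AddCommGroup (_ ⧸ _))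
instance (n : ℤ) : Module k (B.Htot n) := inferInstanceAs (Module k (_ ⧸ _))

/-- The graded piece `F_p H_n / F_{p-1} H_n` of the filtration induced by `F` on the homology
of the total complex. -/
def grHtot (F : ℤ → ℤ → Submodule k B.T) (p n : ℤ) : Type :=
  ↥((F p n ⊔ B.N) ⊓ Submodule.comap B.D B.N) ⧸
    Submodule.comap ((F p n ⊔ B.N) ⊓ Submodule.comap B.D B.N).subtype
      (((F (p - 1) n ⊔ B.N) ⊓ Submodule.comap B.D B.N) ⊔
        Submodule.map B.D (B.totGr (n + 1) ⊔ B.N) ⊔ B.N)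

instance (F : ℤ → ℤ → Submodule k B.T) (p n : ℤ) : AddCommGroup (B.grHtot F p n) :=
  inferInstanceAs (AddCommGroup (_ ⧸ _))
instance (F : ℤ → ℤ → Submodule k B.T) (p n : ℤ) : Module k (B.grHtot F p n) :=
  inferInstanceAs (Module k (_ ⧸ _))

/-- The spectral sequence of the filtration `F` converges to the homology of the total
complex: for every position the pages eventually stabilize and agree with the associated
graded of the induced filtration on the homology of the total complex. -/
def convergesTo (F : ℤ → ℤ → Submodule k B.T) : Prop :=
  ∀ p n : ℤ, ∃ r₀ : ℤ, ∀ r : ℤ, r₀ ≤ r →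
    Nonempty (B.Epage F r p n ≃ₗ[k] B.grHtot F p n)

end RelBicx
/-! ### Hochschild chains, the involution `τ`, and the Hochschild–Tate bicomplex (over `𝔽₂`) -/

section Hochschild

variable {A : DGA (ZMod 2)} (R M : DGBimod A)

/-- The ambient space `R ⊗ M` of the Hochschild chain complex `HC(A, M)` (with respect to the
resolution `R` of the diagonal bimodule): `HC(A,M) = (R ⊗ M)/rel2`. -/
abbrev T2 := R.V ⊗[ZMod 2] M.V

/-- The differential `∂(r ⊗ m) = ∂r ⊗ m + r ⊗ ∂m` (char. 2). -/
def d2 : T2 R M →ₗ[ZMod 2] T2 R M :=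
  TensorProduct.map R.d LinearMap.id + TensorProduct.map LinearMap.id M.d

/-- The grading of `R ⊗ M`. -/
def gr2 (n : ℤ) : Submodule (ZMod 2) (T2 R M) :=
  Submodule.span (ZMod 2)
    {z | ∃ i j, ∃ r ∈ R.gr i, ∃ m ∈ M.gr j, i + j = n ∧ z = r ⊗ₜ[ZMod 2] m}

/-- The Hochschild relations `ra ⊗ m ∼ r ⊗ am` and `ar ⊗ m ∼ r ⊗ ma` (char. 2). -/
def rel2 : Submodule (ZMod 2) (T2 R M) :=
  Submodule.span (ZMod 2)
    ({z | ∃ r a m, z = (R.actR r a) ⊗ₜ[ZMod 2] m + r ⊗ₜ[ZMod 2] (M.actL a m)} ∪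
     {z | ∃ r a m, z = (R.actL a r) ⊗ₜ[ZMod 2] m + r ⊗ₜ[ZMod 2] (M.actR m a)})

/-- The underlying space of the Hochschild chain complex `HC(A, M)`. -/
abbrev HCQ := T2 R M ⧸ rel2 R M

/-- The Hochschild homology `HH_n(A, M)` (computed from the chosen resolution `R → A`). -/
abbrev HH (n : ℤ) := Hgr (T2 R M) (gr2 R M) (rel2 R M) (d2 R M) n

/-- The ambient space `R ⊗ (M ⊗ (R ⊗ M))` of the Hochschild chain complex of the derived
tensor product: `HC(A, M ⊗̃_A M) = (R ⊗ (M ⊠ R ⊠ M))/∼ = (R ⊗ M ⊗ R ⊗ M)/rel4`. -/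
abbrev T4 := R.V ⊗[ZMod 2] (M.V ⊗[ZMod 2] (R.V ⊗[ZMod 2] M.V))

/-- The differential of `R ⊗ M ⊗ R ⊗ M` (char. 2; no signs). -/
def d4 : T4 R M →ₗ[ZMod 2] T4 R M :=
  TensorProduct.map R.d LinearMap.id +
  TensorProduct.map LinearMap.id (TensorProduct.map M.d LinearMap.id +
    TensorProduct.map LinearMap.id (TensorProduct.map R.d LinearMap.id +
      TensorProduct.map LinearMap.id M.d))

/-- The grading of `R ⊗ M ⊗ R ⊗ M`. -/
def gr4 (n : ℤ) : Submodule (ZMod 2) (T4 R M) :=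
  Submodule.span (ZMod 2)
    {z | ∃ i₁ j₁ i₂ j₂, ∃ r ∈ R.gr i₁, ∃ m ∈ M.gr j₁, ∃ r' ∈ R.gr i₂, ∃ m' ∈ M.gr j₂,
      i₁ + j₁ + i₂ + j₂ = n ∧ z = r ⊗ₜ[ZMod 2] (m ⊗ₜ[ZMod 2] (r' ⊗ₜ[ZMod 2] m'))}

/-- The combined relations presenting `HC(A, M ⊗̃_A M)` as a quotient of `R ⊗ M ⊗ R ⊗ M`:
the two relations of the naive tensor products `M ⊠_A R ⊠_A M` and the two outer Hochschild
relations (char. 2). -/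
def rel4 : Submodule (ZMod 2) (T4 R M) :=
  Submodule.span (ZMod 2)
    ({z | ∃ r a m r' m', z = (R.actR r a) ⊗ₜ[ZMod 2] (m ⊗ₜ[ZMod 2] (r' ⊗ₜ[ZMod 2] m')) +
        r ⊗ₜ[ZMod 2] ((M.actL a m) ⊗ₜ[ZMod 2] (r' ⊗ₜ[ZMod 2] m'))} ∪
     {z | ∃ r a m r' m', z = (R.actL a r) ⊗ₜ[ZMod 2] (m ⊗ₜ[ZMod 2] (r' ⊗ₜ[ZMod 2] m')) +
        r ⊗ₜ[ZMod 2] (m ⊗ₜ[ZMod 2] (r' ⊗ₜ[ZMod 2] (M.actR m' a)))} ∪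
     {z | ∃ r a m r' m', z = r ⊗ₜ[ZMod 2] ((M.actR m a) ⊗ₜ[ZMod 2] (r' ⊗ₜ[ZMod 2] m')) +
        r ⊗ₜ[ZMod 2] (m ⊗ₜ[ZMod 2] ((R.actL a r') ⊗ₜ[ZMod 2] m'))} ∪
     {z | ∃ r a m r' m', z = r ⊗ₜ[ZMod 2] (m ⊗ₜ[ZMod 2] ((R.actR r' a) ⊗ₜ[ZMod 2] m')) +
        r ⊗ₜ[ZMod 2] (m ⊗ₜ[ZMod 2] (r' ⊗ₜ[ZMod 2] (M.actL a m')))})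


instance {A : DGA (ZMod 2)} (R M : DGBimod A) :
    HasQuotient (T4 R M) (Submodule (ZMod 2) (T4 R M)) := Submodule.hasQuotient

/-- The underlying space of the Hochschild chain complex `HC(A, M ⊗̃_A M)`. -/
abbrev HCQ4 := T4 R M ⧸ rel4 R M

/-- The Hochschild homology `HH_n(A, M ⊗̃_A M)` of the derived tensor square. -/
abbrev HH4 (n : ℤ) := Hgr (T4 R M) (gr4 R M) (rel4 R M) (d4 R M) n

/-- The involution `τ` of `R ⊗ (M ⊗ (R ⊗ M))` exchanging the two halves:
`r ⊗ (m ⊗ (r' ⊗ m')) ↦ r' ⊗ (m' ⊗ (r ⊗ m))`. -/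
def tau4 : T4 R M →ₗ[ZMod 2] T4 R M :=
  ((TensorProduct.assoc (ZMod 2) R.V M.V (R.V ⊗[ZMod 2] M.V)).toLinearMap).comp
    (((TensorProduct.comm (ZMod 2) (R.V ⊗[ZMod 2] M.V) (R.V ⊗[ZMod 2] M.V)).toLinearMap).comp
      ((TensorProduct.assoc (ZMod 2) R.V M.V (R.V ⊗[ZMod 2] M.V)).symm.toLinearMap))

/-- The Hochschild–Tate bicomplex `HC^{Tate}(A, M ⊗̃_A M)`: the `ℤ`-periodic bicomplex whose
columns are the Hochschild complex of `M ⊗̃_A M` and whose horizontal differential is `1 + τ`. -/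
def TateBicx : RelBicx (ZMod 2) where
  T := ℤ →₀ T4 R M
  gr := fun p q => Submodule.map (Finsupp.lsingle p) (gr4 R M q)
  N := ⨅ p : ℤ, Submodule.comap (Finsupp.lapply p) (rel4 R M)
  dv := Finsupp.mapRange.linearMap (d4 R M)
  dh := (Finsupp.lmapDomain (T4 R M) (ZMod 2) (fun p => p - 1)).comp
    (Finsupp.mapRange.linearMap (LinearMap.id + tau4 R M))


/-- An element of the Hochschild–Tate bicomplex concentrated in column `p`. -/
def tateSingle (p : ℤ) (x : T4 R M) : (TateBicx R M).T := Finsupp.single p x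

/-- A dg bimodule `M` is `π`-formal (with respect to the resolution `R` of the diagonal
bimodule) if the spectral sequence `ʰᵛE` of the Hochschild–Tate bicomplex of `M ⊗̃_A M`
collapses at the `E³`-page; equivalently, all the induced operations
`d^{2i} : HH_k(A,M) → HH_{k-i}(A,M)`, `i ≥ 2`, vanish. -/
def PiFormalBimod : Prop := (TateBicx R M).collapsesAt (TateBicx R M).Frow 3

/-- A dg algebra is `π`-formal if every dg bimodule over it is `π`-formal. -/
def PiFormalAlg (R : DGBimod A) : Prop := ∀ M : DGBimod A, PiFormalBimod R M

end Hochschild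

/-! ### Cyclic modules over `𝔽₂` -/

/-- A cyclic module over `𝔽₂` (a functor on Connes's cyclic category `ΔC`): vector spaces
`X n`, face maps `d n i : X (n+1) → X n` (`0 ≤ i ≤ n+1`), degeneracies
`s n i : X n → X (n+1)` (`0 ≤ i ≤ n`), and cyclic operators `t n` generating a
`ℤ/(n+1)`-action, subject to the cyclic identities. (Face and degeneracy maps for indices out
of range are unconstrained junk data.) -/
structure CycMod : Type 1 where
  X : ℕ → Type
  [acg : ∀ n, AddCommGroup (X n)]
  [mod : ∀ n, Module (ZMod 2) (X n)]
  d : ∀ n : ℕ, ℕ → (X (n + 1) →ₗ[ZMod 2] X n)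
  s : ∀ n : ℕ, ℕ → (X n →ₗ[ZMod 2] X (n + 1))
  t : ∀ n : ℕ, X n →ₗ[ZMod 2] X n
  dd : ∀ n i j, i < j → j ≤ n + 2 →
    (d n i).comp (d (n + 1) j) = (d n (j - 1)).comp (d (n + 1) i)
  ss : ∀ n i j, i ≤ j → j ≤ n →
    (s (n + 1) i).comp (s n j) = (s (n + 1) (j + 1)).comp (s n i)
  ds_lt : ∀ n i j, i < j → j ≤ n + 1 →
    (d (n + 1) i).comp (s (n + 1) j) = (s n (j - 1)).comp (d n i)
  ds_eq : ∀ n j, j ≤ n →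
    (d n j).comp (s n j) = LinearMap.id ∧ (d n (j + 1)).comp (s n j) = LinearMap.id
  ds_gt : ∀ n i j, j + 1 < i → i ≤ n + 2 →
    (d (n + 1) i).comp (s (n + 1) j) = (s n j).comp (d n (i - 1))
  t_ord : ∀ n, (t n) ^ (n + 1) = LinearMap.id
  dt : ∀ n i, 1 ≤ i → i ≤ n + 1 → (d n i).comp (t (n + 1)) = (t n).comp (d n (i - 1))
  d0t : ∀ n, (d n 0).comp (t (n + 1)) = d n (n + 1)
  st : ∀ n i, 1 ≤ i → i ≤ n → (s n i).comp (t n) = (t (n + 1)).comp (s n (i - 1))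
  s0t : ∀ n, (s n 0).comp (t n) = ((t (n + 1)).comp (t (n + 1))).comp (s n n)

attribute [instance] CycMod.acg CycMod.mod

namespace CycMod

variable (C : CycMod)

/-- The Hochschild differential `∂ = ∑_{i=0}^{n+1} d_i : X_{n+1} → X_n`. -/
def bd (n : ℕ) : C.X (n + 1) →ₗ[ZMod 2] C.X n := ∑ i ∈ Finset.range (n + 2), C.d n i

/-- The bar differential `b' = ∑_{i=0}^{n} d_i : X_{n+1} → X_n`. -/
def bd' (n : ℕ) : C.X (n + 1) →ₗ[ZMod 2] C.X n := ∑ i ∈ Finset.range (n + 1), C.d n i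

/-- Hochschild cycles. -/
def cyc : ∀ n : ℕ, Submodule (ZMod 2) (C.X n)
  | 0 => ⊤
  | (m + 1) => LinearMap.ker (C.bd m)

/-- The Hochschild homology `HH_n(𝓜)` of a cyclic module. -/
def HHc (n : ℕ) : Type :=
  ↥(C.cyc n) ⧸ Submodule.comap (C.cyc n).subtype (LinearMap.range (C.bd n))

instance (n : ℕ) : AddCommGroup (C.HHc n) := inferInstanceAs (AddCommGroup (_ ⧸ _))
instance (n : ℕ) : Module (ZMod 2) (C.HHc n) := inferInstanceAs (Module (ZMod 2) (_ ⧸ _))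

/-- A cyclic module is bounded if its Hochschild homology vanishes in all but finitely many
degrees. -/
def Bounded : Prop := Set.Finite {n : ℕ | Nontrivial (C.HHc n)}

/-- The cyclic bicomplex `CC(𝓜)`: first-quadrant, columns alternately `(HC, ∂)` and
`(HC, b')`, horizontal maps alternately `1 - t` and `N = ∑ tⁱ` (char. 2). Its column
filtration spectral sequence is the Hodge-to-de Rham (Hochschild-to-cyclic) spectral
sequence, converging to cyclic homology. -/
def CC : RelBicx (ZMod 2) where
  T := Π₀ pq : ℕ × ℕ, C.X pq.2
  gr := fun p q =>
    if 0 ≤ p ∧ 0 ≤ q then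
      Submodule.map (DFinsupp.lsingle (p.toNat, q.toNat)) ⊤
    else ⊥
  N := ⊥
  dv := DFinsupp.lsum ℕ (fun pq =>
    match pq with
    | (_, 0) => 0
    | (p, q + 1) =>
      (DFinsupp.lsingle (p, q)).comp (if Even p then C.bd q else C.bd' q))
  dh := DFinsupp.lsum ℕ (fun pq =>
    match pq with
    | (0, _) => 0
    | (p + 1, q) =>
      (DFinsupp.lsingle (p, q)).comp
        (if Even p then LinearMap.id + C.t q
         else ∑ i ∈ Finset.range (q + 1), (C.t q) ^ i))

/-- Degeneration of the Hodge-to-de Rham spectral sequence of `𝓜` at the `E^{r₀}` page. -/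
def HdRdegenAt (r₀ : ℤ) : Prop := C.CC.collapsesAt C.CC.Fcol r₀

end CycMod

/-- A map of cyclic modules. -/
def IsCycHom (C D : CycMod) (f : ∀ n, C.X n →ₗ[ZMod 2] D.X n) : Prop :=
  (∀ n i, (f n).comp (C.d n i) = (D.d n i).comp (f (n + 1))) ∧
  (∀ n i, (f (n + 1)).comp (C.s n i) = (D.s n i).comp (f n)) ∧
  (∀ n, (f n).comp (C.t n) = (D.t n).comp (f n))

/-- A degreewise map of `ℕ`-indexed chain complexes induces an isomorphism on homology
(stated elementarily). -/
def IsNatQIso (X Y : ℕ → Type)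
    [∀ n, AddCommGroup (X n)] [∀ n, Module (ZMod 2) (X n)]
    [∀ n, AddCommGroup (Y n)] [∀ n, Module (ZMod 2) (Y n)]
    (dX : ∀ n, X (n + 1) →ₗ[ZMod 2] X n) (dY : ∀ n, Y (n + 1) →ₗ[ZMod 2] Y n)
    (f : ∀ n, X n →ₗ[ZMod 2] Y n) : Prop :=
  ((∀ y : Y 0, ∃ x : X 0, f 0 x - y ∈ LinearMap.range (dY 0)) ∧
    (∀ x : X 0, f 0 x ∈ LinearMap.range (dY 0) → x ∈ LinearMap.range (dX 0))) ∧
  (∀ n : ℕ,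
    (∀ y : Y (n + 1), dY n y = 0 →
      ∃ x : X (n + 1), dX n x = 0 ∧ f (n + 1) x - y ∈ LinearMap.range (dY (n + 1))) ∧
    (∀ x : X (n + 1), dX n x = 0 → f (n + 1) x ∈ LinearMap.range (dY (n + 1)) →
      x ∈ LinearMap.range (dX (n + 1))))

/-- A quasi-isomorphism of cyclic modules. -/
def IsCycQIso (C D : CycMod) (f : ∀ n, C.X n →ₗ[ZMod 2] D.X n) : Prop :=
  IsCycHom C D f ∧ IsNatQIso C.X D.X C.bd D.bd f

namespace CycMod

variable (C : CycMod)

/-- `Π_n(𝓜) = ⊕_{p=0}^{n} HC_{n+1}(𝓜)`. -/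
abbrev PiX (n : ℕ) : Type := Fin (n + 1) → C.X (n + 1)

/-- The differential of `Π(𝓜)`: on the summand indexed by `p` (with `q = n - p`),
`∂(x) = (∑_{i=0}^{p} d_i x)_{(p-1,q)} + (∑_{j=p+1}^{p+q+1} d_j x)_{(p,q-1)}`, omitting the
first sum if `p = 0` and the second if `q = 0`. -/
def bdPi (n : ℕ) : C.PiX (n + 1) →ₗ[ZMod 2] C.PiX n :=
  LinearMap.pi (fun p : Fin (n + 1) =>
    ((∑ j ∈ Finset.Icc ((p : ℕ) + 1) (n + 2), C.d (n + 1) j).comp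
      (LinearMap.proj (Fin.castSucc p))) +
    ((∑ i ∈ Finset.range ((p : ℕ) + 2), C.d (n + 1) i).comp
      (LinearMap.proj (Fin.succ p))))

/-- The augmentation `ε(x_0, …, x_n) = d_n(x_n) : Π_n(𝓜) → HC_n(𝓜)`. -/
def eps (n : ℕ) : C.PiX n →ₗ[ZMod 2] C.X n :=
  (C.d n n).comp (LinearMap.proj (Fin.last n))

end CycMod

namespace CycMod

variable (C : CycMod)

/-- The involution `τ(x_0,…,x_n) = (t x_n, t² x_{n-1}, …, t^{n+1} x_0)` of `Π_n(𝓜)`. -/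
def tauPi (n : ℕ) : C.PiX n →ₗ[ZMod 2] C.PiX n :=
  LinearMap.pi (fun p : Fin (n + 1) =>
    ((C.t (n + 1)) ^ ((p : ℕ) + 1)).comp (LinearMap.proj (Fin.rev p)))

/-- The first-quadrant bicomplex `Π^{ℤ/2}`: columns `Π_*(𝓜)` for `p ≥ 0`, vertical
differential `∂_Π` and horizontal differential `1 + τ`. -/
def PiZhalf : RelBicx (ZMod 2) where
  T := Π₀ pq : ℤ × ℕ, C.PiX pq.2
  gr := fun p q =>
    if 0 ≤ p ∧ 0 ≤ q then Submodule.map (DFinsupp.lsingle (p, q.toNat)) ⊤ else ⊥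
  N := ⊥
  dv := DFinsupp.lsum ℕ (fun pq =>
    match pq with
    | (_, 0) => 0
    | (p, q + 1) => (DFinsupp.lsingle (p, q)).comp (C.bdPi q))
  dh := DFinsupp.lsum ℕ (fun pq =>
    if pq.1 ≤ 0 then 0
    else (DFinsupp.lsingle (pq.1 - 1, pq.2)).comp (LinearMap.id + C.tauPi pq.2))

/-- The `ℤ`-periodic bicomplex `Π^{Tate}`: columns `Π_*(𝓜)` for all `p ∈ ℤ`, vertical
differential `∂_Π` and horizontal differential `1 + τ`. -/
def PiTate : RelBicx (ZMod 2) where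
  T := Π₀ pq : ℤ × ℕ, C.PiX pq.2
  gr := fun p q =>
    if 0 ≤ q then Submodule.map (DFinsupp.lsingle (p, q.toNat)) ⊤ else ⊥
  N := ⊥
  dv := DFinsupp.lsum ℕ (fun pq =>
    match pq with
    | (_, 0) => 0
    | (p, q + 1) => (DFinsupp.lsingle (p, q)).comp (C.bdPi q))
  dh := DFinsupp.lsum ℕ (fun pq =>
    (DFinsupp.lsingle (pq.1 - 1, pq.2)).comp (LinearMap.id + C.tauPi pq.2))

end CycMod

namespace CycMod
variable (C : CycMod)

theorem c2 {V : Type} [AddCommGroup V] [Module (ZMod 2) V] (x : V) : x + x = 0 :=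
  ZModModule.add_self x

theorem d_t_le (n j k : ℕ) (h : k ≤ j) (hj : j ≤ n + 1) (x : C.X (n + 1)) :
    C.d n j ((C.t (n + 1) ^ k) x) = (C.t n ^ k) (C.d n (j - k) x) := by
  induction k generalizing j with
  | zero => simp
  | succ k ih =>
    have h1 := LinearMap.congr_fun (C.dt n j (by omega) hj) ((C.t (n + 1) ^ k) x)
    simp only [LinearMap.comp_apply] at h1
    rw [pow_succ', Module.End.mul_apply, h1, ih (j - 1) (by omega) (by omega), pow_succ',
      Module.End.mul_apply, show j - (k + 1) = j - 1 - k by omega]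

theorem d_t_gt (n j k : ℕ) (h : j < k) (hk : k ≤ j + n + 2) (hj : j ≤ n + 1) (x : C.X (n + 1)) :
    C.d n j ((C.t (n + 1) ^ k) x) = (C.t n ^ (k - 1)) (C.d n (n + 2 + j - k) x) := by
  obtain ⟨m, rfl⟩ : ∃ m, k = j + (m + 1) := ⟨k - j - 1, by omega⟩
  have h1 := LinearMap.congr_fun (C.d0t n) ((C.t (n + 1) ^ m) x)
  simp only [LinearMap.comp_apply] at h1
  rw [pow_add, Module.End.mul_apply, C.d_t_le n j j le_rfl hj, Nat.sub_self, pow_succ' _ m,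
    Module.End.mul_apply, h1, C.d_t_le n (n + 1) m (by omega) le_rfl, ← Module.End.mul_apply,
    ← pow_add]
  congr 2
  congr 1
  omega

theorem t_pow_bd (n k : ℕ) (hk : k ≤ n) (x : C.X (n + 1)) :
    (C.t n ^ k) (C.bd n x) = ∑ j ∈ Finset.Ico k (n + 1), C.d n j ((C.t (n + 1) ^ k) x)
      + ∑ j ∈ Finset.range (k + 1), C.d n j ((C.t (n + 1) ^ (k + 1)) x) := by
  have e1 : ∑ j ∈ Finset.Ico k (n + 1), C.d n j ((C.t (n + 1) ^ k) x)
      = ∑ j ∈ Finset.range (n + 1 - k), (C.t n ^ k) (C.d n j x) := by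
    rw [Finset.sum_Ico_eq_sum_range]
    refine Finset.sum_congr rfl fun j hj => ?_
    rw [Finset.mem_range] at hj
    rw [C.d_t_le n (k + j) k (by omega) (by omega), Nat.add_sub_cancel_left]
  have e2 : ∑ j ∈ Finset.range (k + 1), C.d n j ((C.t (n + 1) ^ (k + 1)) x)
      = ∑ j ∈ Finset.range (k + 1), (C.t n ^ k) (C.d n (n + 1 - k + j) x) := by
    refine Finset.sum_congr rfl fun j hj => ?_
    rw [Finset.mem_range] at hj
    rw [C.d_t_gt n j (k + 1) (by omega) (by omega) (by omega)]
    congr 2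
    congr 1
    omega
  rw [e1, e2, bd, LinearMap.sum_apply, map_sum,
    show n + 2 = (n + 1 - k) + (k + 1) by omega, Finset.sum_range_add]

/-- The operator `s = t s_n` -/
def sx (n : ℕ) : C.X n →ₗ[ZMod 2] C.X (n + 1) := (C.t (n + 1)).comp (C.s n n)

theorem t_ord' (n : ℕ) (x : C.X n) : (C.t n ^ (n + 1)) x = x := by
  rw [C.t_ord]; rfl

theorem ts (n p : ℕ) (h : p ≤ n) (x : C.X n) (i : ℕ) (hi : i + p ≤ n) :
    (C.t (n + 1) ^ p) (C.s n i x) = C.s n (i + p) ((C.t n ^ p) x) := by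
  induction p with
  | zero => simp
  | succ p ih =>
    rw [pow_succ', Module.End.mul_apply, ih (by omega) (by omega)]
    have h1 := LinearMap.congr_fun (C.st n (i + (p + 1)) (by omega) hi) ((C.t n ^ p) x)
    simp only [LinearMap.comp_apply] at h1
    rw [pow_succ', Module.End.mul_apply, h1]
    rfl

theorem key1 (n p : ℕ) (h : p ≤ n) (x : C.X n) :
    (C.t (n + 1) ^ (p + 1)) (C.s n (n - p) x) = C.sx n ((C.t n ^ p) x) := by
  rw [pow_succ', Module.End.mul_apply, C.ts n p h x (n - p) (by omega), Nat.sub_add_cancel h]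
  rfl

theorem key2 (n p : ℕ) (h : p ≤ n + 1) (x : C.X n) :
    (C.t (n + 2) ^ (p + 1)) (C.s (n + 1) (n + 1 - p) (C.sx n x))
      = C.s (n + 1) p (C.sx n ((C.t n ^ p) x)) := by
  have S0 : ∀ y : C.X (n + 1), C.s (n + 1) 0 (C.t (n + 1) y)
      = (C.t (n + 2) ^ 2) (C.s (n + 1) (n + 1) y) := fun y => by
    have := LinearMap.congr_fun (C.s0t (n + 1)) y
    simp only [LinearMap.comp_apply] at this
    rw [this, pow_two]; rfl
  have S1 : ∀ i, i ≤ n → ∀ y : C.X (n + 1), C.s (n + 1) (i + 1) (C.t (n + 1) y)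
      = C.t (n + 2) (C.s (n + 1) i y) := fun i hi y => by
    have := LinearMap.congr_fun (C.st (n + 1) (i + 1) (by omega) (by omega)) y
    exact this
  have SS : ∀ i, i ≤ n → C.s (n + 1) i (C.s n n x) = C.s (n + 1) (n + 1) (C.s n i x) :=
    fun i hi => by
    have := LinearMap.congr_fun (C.ss n i n hi le_rfl) x
    simpa only [LinearMap.comp_apply] using this
  rcases Nat.lt_or_ge n p with hp | hp
  · obtain rfl : p = n + 1 := by omega
    rw [C.t_ord', Nat.sub_self]
    simp only [sx, LinearMap.comp_apply]
    rw [S0, S1 n le_rfl, SS n le_rfl, ← Module.End.mul_apply, ← pow_add,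
      show n + 1 + 1 + 2 = 1 + (n + 2 + 1) by omega, pow_add, Module.End.mul_apply, C.t_ord', pow_one]
  · rw [← C.key1 n p hp, show n + 1 - p = (n - p) + 1 by omega]
    simp only [sx, LinearMap.comp_apply]
    have e := C.ts (n + 1) p (by omega) (C.t (n + 1) (C.s n (n - p) x)) 0 (by omega)
    rw [Nat.zero_add, ← Module.End.mul_apply (C.t (n + 1) ^ p), ← pow_succ] at e
    rw [S1 (n - p) (by omega), SS (n - p) (by omega), ← e, S0, ← Module.End.mul_apply,
      ← Module.End.mul_apply, ← pow_succ, ← pow_add]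


/-! simplicial computations with `s_p` -/

theorem sum_d_s_hi (n p : ℕ) (hp : p ≤ n) (w : C.X (n + 1)) :
    ∑ j ∈ Finset.Icc (p + 1) (n + 2), C.d (n + 1) j (C.s (n + 1) p w)
      = w + C.s n p (∑ j ∈ Finset.Icc (p + 1) (n + 1), C.d n j w) := by
  have e : Finset.Icc (p + 1) (n + 2) = Finset.Ico (p + 1) (n + 3) := by
    ext; simp; omega
  have e' : Finset.Icc (p + 1) (n + 1) = Finset.Ico (p + 1) (n + 2) := by
    ext; simp; omega
  rw [e, e', Finset.sum_eq_sum_Ico_succ_bot (by omega)]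
  have h1 := LinearMap.congr_fun (C.ds_eq (n + 1) p (by omega)).2 w
  simp only [LinearMap.comp_apply, LinearMap.id_apply] at h1
  rw [h1, map_sum]
  congr 1
  rw [Finset.sum_Ico_eq_sum_range, Finset.sum_Ico_eq_sum_range]
  refine Finset.sum_congr (by congr 1; omega) fun j hj => ?_
  rw [Finset.mem_range] at hj
  have h2 := LinearMap.congr_fun (C.ds_gt n (p + 1 + 1 + j) p (by omega) (by omega)) w
  simp only [LinearMap.comp_apply] at h2
  rw [h2, show p + 1 + 1 + j - 1 = p + 1 + j by omega]

theorem sum_d_s_lo (n p : ℕ) (hp : p ≤ n) (w : C.X (n + 1)) :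
    ∑ i ∈ Finset.range (p + 2), C.d (n + 1) i (C.s (n + 1) (p + 1) w)
      = w + C.s n p (∑ i ∈ Finset.range (p + 1), C.d n i w) := by
  have h1 := LinearMap.congr_fun (C.ds_eq (n + 1) (p + 1) (by omega)).1 w
  simp only [LinearMap.comp_apply, LinearMap.id_apply] at h1
  rw [Finset.sum_range_succ, h1, map_sum, add_comm _ w]
  congr 1
  refine Finset.sum_congr rfl fun j hj => ?_
  rw [Finset.mem_range] at hj
  have h2 := LinearMap.congr_fun (C.ds_lt n j (p + 1) (by omega) (by omega)) w
  simp only [LinearMap.comp_apply] at h2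
  rw [h2]
  rfl

theorem bdPi_apply (n : ℕ) (z : C.PiX (n + 1)) (p : Fin (n + 1)) :
    C.bdPi n z p = ∑ j ∈ Finset.Icc ((p : ℕ) + 1) (n + 2), C.d (n + 1) j (z p.castSucc)
      + ∑ i ∈ Finset.range ((p : ℕ) + 2), C.d (n + 1) i (z p.succ) := by
  simp [bdPi]

/-- The element with components `s_p (g p)`. -/
def spi (n : ℕ) (g : ℕ → C.X n) : C.PiX n := fun p => C.s n p (g p)

theorem bdPi_spi (n : ℕ) (g : ℕ → C.X (n + 1)) (p : Fin (n + 1)) :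
    C.bdPi n (C.spi (n + 1) g) p = g p + g (p + 1)
      + C.s n p (∑ j ∈ Finset.Icc ((p : ℕ) + 1) (n + 1), C.d n j (g p)
        + ∑ i ∈ Finset.range ((p : ℕ) + 1), C.d n i (g (p + 1))) := by
  have hp : (p : ℕ) ≤ n := by omega
  rw [bdPi_apply]
  simp only [spi, Fin.val_castSucc, Fin.val_succ]
  rw [C.sum_d_s_hi n p hp, C.sum_d_s_lo n p hp, map_add]
  abel

theorem bd_split (n p : ℕ) (hp : p ≤ n) (x : C.X (n + 1)) :
    C.bd n x = ∑ j ∈ Finset.Icc (p + 1) (n + 1), C.d n j x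
      + ∑ i ∈ Finset.range (p + 1), C.d n i x := by
  have e' : Finset.Icc (p + 1) (n + 1) = Finset.Ico (p + 1) (n + 2) := by
    ext; simp; omega
  rw [e', add_comm (Finset.sum _ _), Finset.sum_range_add_sum_Ico _ (by omega), bd, LinearMap.sum_apply]

/-- `σ : HC → Π`. -/
def sg (n : ℕ) : C.X n →ₗ[ZMod 2] C.PiX n := LinearMap.pi fun p => C.s n p

theorem sg_spi (n : ℕ) (x : C.X n) : C.sg n x = C.spi n fun _ => x := rfl

theorem bdPi_sg (n : ℕ) (x : C.X (n + 1)) : C.bdPi n (C.sg (n + 1) x) = C.sg n (C.bd n x) := by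
  funext p
  rw [sg_spi, bdPi_spi, c2, zero_add, ← C.bd_split n p (by omega)]
  rfl

/-- Partial norm. -/
def NN (n p : ℕ) (x : C.X n) : C.X n := ∑ k ∈ Finset.Ico p (n + 1), (C.t n ^ k) x

theorem NN_succ (n p : ℕ) (hp : p ≤ n) (x : C.X n) :
    C.NN n p x = (C.t n ^ p) x + C.NN n (p + 1) x := by
  rw [NN, Finset.sum_eq_sum_Ico_succ_bot (by omega)]; rfl

theorem NN_last (n p : ℕ) (hp : n < p) (x : C.X n) : C.NN n p x = 0 := by
  rw [NN, Finset.Ico_eq_empty (by omega), Finset.sum_empty]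

theorem NN_add (n p : ℕ) (x y : C.X n) : C.NN n p (x + y) = C.NN n p x + C.NN n p y := by
  simp [NN, Finset.sum_add_distrib]

theorem NN_t (n p : ℕ) (hp : p ≤ n) (x : C.X n) :
    C.NN n p (C.t n x) = C.NN n (p + 1) x + x := by
  unfold NN
  have : ∀ k, (C.t n ^ k) (C.t n x) = (C.t n ^ (k + 1)) x := fun k => by
    rw [pow_succ]; rfl
  simp only [this]
  rw [Finset.sum_Ico_add' (fun k => (C.t n ^ k) x) p (n + 1) 1,
    Finset.sum_Ico_succ_top (by omega), C.t_ord']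

/-- `f₁` -/
def f1 (n : ℕ) (x : C.X n) : C.PiX (n + 1) := C.spi (n + 1) fun p => C.sx n (C.NN n p x)

theorem f1_add (n : ℕ) (x y : C.X n) : C.f1 n (x + y) = C.f1 n x + C.f1 n y := by
  funext p; simp [f1, spi, NN_add]

theorem d_sx_mid (n i : ℕ) (hi : i ≤ n) (x : C.X (n + 1)) :
    C.d (n + 1) (i + 1) (C.sx (n + 1) x) = C.sx n (C.d n i x) := by
  have h1 := LinearMap.congr_fun (C.dt (n + 1) (i + 1) (by omega) (by omega)) (C.s (n + 1) (n + 1) x)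
  have h2 := LinearMap.congr_fun (C.ds_lt n i (n + 1) (by omega) (by omega)) x
  simp only [LinearMap.comp_apply, Nat.add_sub_cancel] at h1 h2
  simp only [sx, LinearMap.comp_apply]
  rw [h1, h2]

theorem d_sx_zero (n : ℕ) (x : C.X n) : C.d n 0 (C.sx n x) = x := by
  have h1 := LinearMap.congr_fun (C.d0t n) (C.s n n x)
  have h2 := LinearMap.congr_fun (C.ds_eq n n le_rfl).2 x
  simp only [LinearMap.comp_apply, LinearMap.id_apply] at h1 h2
  simp only [sx, LinearMap.comp_apply]
  rw [h1, h2]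

theorem d_sx_last (n : ℕ) (x : C.X n) : C.d n (n + 1) (C.sx n x) = C.t n x := by
  have h1 := LinearMap.congr_fun (C.dt n (n + 1) (by omega) le_rfl) (C.s n n x)
  have h2 := LinearMap.congr_fun (C.ds_eq n n le_rfl).1 x
  simp only [LinearMap.comp_apply, LinearMap.id_apply, Nat.add_sub_cancel] at h1 h2
  simp only [sx, LinearMap.comp_apply]
  rw [h1, h2]

theorem bd_sx (n : ℕ) (x : C.X (n + 1)) :
    C.bd (n + 1) (C.sx (n + 1) x) = x + C.t (n + 1) x + C.sx n (C.bd' n x) := by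
  rw [bd, LinearMap.sum_apply, Finset.sum_range_succ, Finset.sum_range_succ', d_sx_zero, d_sx_last,
    bd', LinearMap.sum_apply, map_sum, Finset.sum_congr rfl fun i hi =>
      C.d_sx_mid n i (by rw [Finset.mem_range] at hi; omega) x]
  abel

theorem bd_sx_zero (x : C.X 0) : C.bd 0 (C.sx 0 x) = x + C.t 0 x := by
  rw [bd, LinearMap.sum_apply, Finset.sum_range_succ, Finset.sum_range_one, d_sx_zero]
  rw [d_sx_last]

theorem tauPi_apply (n : ℕ) (z : C.PiX n) (p : Fin (n + 1)) :
    C.tauPi n z p = (C.t (n + 1) ^ ((p : ℕ) + 1)) (z p.rev) := rfl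

theorem tau_sg (n : ℕ) (x : C.X n) (p : Fin (n + 1)) :
    C.tauPi n (C.sg n x) p = C.sx n ((C.t n ^ (p : ℕ)) x) := by
  rw [tauPi_apply, ← C.key1 n p (by omega)]
  simp only [sg, LinearMap.pi_apply, Fin.val_rev]
  rw [show n + 1 - (p + 1) = n - (p : ℕ) by omega]

theorem tau_sg_sx (n : ℕ) (x : C.X n) (p : Fin (n + 2)) :
    C.tauPi (n + 1) (C.sg (n + 1) (C.sx n x)) p
      = C.s (n + 1) p (C.sx n ((C.t n ^ (p : ℕ)) x)) := by
  rw [tauPi_apply, ← C.key2 n p (by omega)]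
  simp only [sg, LinearMap.pi_apply, Fin.val_rev]
  rw [show n + 1 + 1 - (p + 1) = n + 1 - (p : ℕ) by omega]

/-- (E) -/
theorem identE (n : ℕ) (x : C.X n) :
    C.sg (n + 1) (C.sx n x) + C.tauPi (n + 1) (C.sg (n + 1) (C.sx n x))
      = C.f1 n (x + C.t n x) := by
  funext p
  rw [Pi.add_apply, tau_sg_sx]
  simp only [f1, spi, sg, LinearMap.pi_apply]
  rw [← map_add, ← map_add]
  congr 2
  rw [NN_add]
  rcases Nat.lt_or_ge n p with hp | hp
  · rw [C.NN_last n p hp, C.NN_last n p hp, show (p : ℕ) = n + 1 by omega, C.t_ord', c2, add_zero]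
  · rw [C.NN_t n p hp, C.NN_succ n p hp]
    have := c2 (C.NN n (p + 1) x)
    rw [show (C.t n ^ (p : ℕ)) x + C.NN n (p + 1) x + (C.NN n (p + 1) x + x)
      = x + (C.t n ^ (p : ℕ)) x + (C.NN n (p + 1) x + C.NN n (p + 1) x) by abel, this, add_zero]

/-- (D) -/
theorem identD (n : ℕ) (x : C.X n) :
    C.f1 n x + C.tauPi (n + 1) (C.f1 n x)
      = C.sg (n + 1) (C.sx n (∑ i ∈ Finset.range (n + 1), (C.t n ^ i) x)) := by
  funext p
  have hp : (p : ℕ) ≤ n + 1 := by omega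
  rw [Pi.add_apply, tauPi_apply]
  simp only [f1, spi, sg, LinearMap.pi_apply, Fin.val_rev]
  rw [show n + 1 + 1 - (p + 1) = n + 1 - (p : ℕ) by omega, C.key2 n p hp, ← map_add, ← map_add]
  congr 2
  rw [add_comm (NN _ _ _ _), NN, map_sum, ← Finset.sum_range_add_sum_Ico _ hp, NN]
  congr 1
  rw [Finset.sum_Ico_eq_sum_range]
  refine Finset.sum_congr (by congr 1; omega) fun k hk => ?_
  rw [← Module.End.mul_apply, ← pow_add, show p + (n + 1 - (p : ℕ) + k) = k + (n + 1) by omega,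
    pow_add, Module.End.mul_apply, C.t_ord']

/-- (F) -/
theorem identF (n p : ℕ) (hp : p ≤ n + 1) (x : C.X (n + 1)) :
    ∑ j ∈ Finset.Ico p (n + 1), C.d n j (C.NN (n + 1) p x)
      + ∑ i ∈ Finset.range p, C.d n i (C.NN (n + 1) (p + 1) x) = C.NN n p (C.bd n x) := by
  induction hp using Nat.decreasingInduction with
  | self =>
    rw [C.NN_last n (n + 1) (by omega), Finset.Ico_self, Finset.sum_empty,
      C.NN_last (n + 1) (n + 1 + 1) (by omega)]
    simp
  | of_succ p hp ih =>
    have hp' : p ≤ n := by omega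
    rw [C.NN_succ n p hp', ← ih, C.t_pow_bd n p hp', C.NN_succ (n + 1) p (by omega)]
    rw [C.NN_succ (n + 1) (p + 1) (by omega)]
    simp only [map_add, Finset.sum_add_distrib, Finset.sum_range_succ]
    rw [Finset.sum_eq_sum_Ico_succ_bot (show p < n + 1 by omega)
        (fun j => C.d n j ((C.t (n + 1) ^ (p + 1)) x)),
      Finset.sum_eq_sum_Ico_succ_bot (show p < n + 1 by omega)
        (fun j => C.d n j (C.NN (n + 1) (p + 1 + 1) x))]
    abel

theorem identB_aux (n : ℕ) (x : C.X n) (p : Fin (n + 1)) :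
    C.bdPi n (C.f1 n x) p = C.sx n ((C.t n ^ (p : ℕ)) x) + C.s n p x
      + C.s n p (∑ j ∈ Finset.Ico ((p : ℕ) + 1) (n + 1), C.d n j (C.sx n (C.NN n p x))
        + ∑ i ∈ Finset.Ico 1 ((p : ℕ) + 1), C.d n i (C.sx n (C.NN n (p + 1) x))) := by
  have hp : (p : ℕ) ≤ n := by omega
  rw [f1, bdPi_spi]
  have e : Finset.Icc ((p : ℕ) + 1) (n + 1) = Finset.Ico ((p : ℕ) + 1) (n + 1 + 1) := by
    ext; simp
  rw [e, Finset.sum_Ico_succ_top (by omega), d_sx_last, Finset.range_eq_Ico,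
    Finset.sum_eq_sum_Ico_succ_bot (show 0 < (p : ℕ) + 1 by omega), d_sx_zero]
  have h1 : C.t n (C.NN n p x) = C.NN n (p + 1) x + x := by
    rw [← C.NN_t n p hp]
    simp only [NN, map_sum]
    refine Finset.sum_congr rfl fun k _ => ?_
    rw [← Module.End.mul_apply, ← pow_succ', pow_succ]; rfl
  rw [h1, C.NN_succ n p hp]
  simp only [map_add]
  have a1 := c2 (C.sx n (C.NN n (p + 1) x))
  have a2 := c2 (C.s n p (C.NN n (p + 1) x))
  generalize C.sx n (C.NN n (p + 1) x) = u at *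
  generalize C.s n p (C.NN n (p + 1) x) = v at *
  rw [add_assoc (C.sx n _) u u, a1]
  simp only [zero_add]
  rw [← sub_eq_zero]
  refine Eq.trans ?_ a2
  abel

/-- (B), positive degree -/
theorem identB (n : ℕ) (x : C.X (n + 1)) :
    C.bdPi (n + 1) (C.f1 (n + 1) x) = C.sg (n + 1) x + C.tauPi (n + 1) (C.sg (n + 1) x)
      + C.f1 n (C.bd n x) := by
  funext p
  have hp : (p : ℕ) ≤ n + 1 := by omega
  rw [identB_aux, Pi.add_apply, Pi.add_apply, tau_sg, add_comm (C.sx _ _)]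
  congr 1
  simp only [f1, spi]
  congr 1
  rw [← C.identF n p hp, map_add, map_sum, map_sum]
  congr 1
  · rw [← Finset.sum_Ico_add' (fun j => C.d (n + 1) j _) p (n + 1) 1]
    refine Finset.sum_congr rfl fun j hj => ?_
    rw [Finset.mem_Ico] at hj
    exact C.d_sx_mid n j (by omega) _
  · rw [← Finset.sum_Ico_add' (fun j => C.d (n + 1) j _) 0 p 1, Finset.range_eq_Ico]
    refine Finset.sum_congr rfl fun j hj => ?_
    rw [Finset.mem_Ico] at hj
    exact C.d_sx_mid n j (by omega) _

theorem identB_zero (x : C.X 0) :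
    C.bdPi 0 (C.f1 0 x) = C.sg 0 x + C.tauPi 0 (C.sg 0 x) := by
  funext p
  rw [identB_aux, Pi.add_apply, tau_sg, add_comm (C.sx _ _)]
  obtain rfl : p = 0 := Fin.eq_zero p
  simp [sg]

/-- Tail sums of an element of `Π_n`. -/
def tail (n : ℕ) (z : C.PiX n) (k : ℕ) : C.X (n + 1) :=
  ∑ i ∈ Finset.Ico k (n + 1), (if h : i < n + 1 then z ⟨i, h⟩ else 0)

theorem tail_last (n : ℕ) (z : C.PiX n) (k : ℕ) (hk : n < k) : C.tail n z k = 0 := by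
  rw [tail, Finset.Ico_eq_empty (by omega), Finset.sum_empty]

theorem tail_succ (n : ℕ) (z : C.PiX n) (k : ℕ) (hk : k < n + 1) :
    C.tail n z k = z ⟨k, hk⟩ + C.tail n z (k + 1) := by
  rw [tail, Finset.sum_eq_sum_Ico_succ_bot (by omega), dif_pos hk]; rfl

/-- The augmentation. -/
def ep (n : ℕ) (z : C.PiX n) : C.X n := C.d n (n + 1) (z (Fin.last n))

theorem tail_bd (n k : ℕ) (hk : k ≤ n + 1) (z : C.PiX (n + 1)) :
    ∑ j ∈ Finset.Icc (k + 1) (n + 2), C.d (n + 1) j (C.tail (n + 1) z k)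
      + ∑ i ∈ Finset.range (k + 1), C.d (n + 1) i (C.tail (n + 1) z (k + 1))
      = C.tail n (C.bdPi n z) k + C.ep (n + 1) z := by
  induction hk using Nat.decreasingInduction with
  | self =>
    rw [C.tail_last n _ (n + 1) (by omega), C.tail_succ (n + 1) z (n + 1) (by omega),
      C.tail_last (n + 1) _ (n + 1 + 1) (by omega)]
    simp [ep]
    rfl
  | of_succ k hk ih =>
    have hk' : k ≤ n := by omega
    rw [C.tail_succ n _ k (by omega), add_assoc (C.bdPi n z _), ← ih, bdPi_apply,
      C.tail_succ (n + 1) z k (by omega), C.tail_succ (n + 1) z (k + 1) (by omega)]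
    have e : ∀ m, Finset.Icc m (n + 2) = Finset.Ico m (n + 3) := by
      intro m; ext; simp; omega
    simp only [map_add, Finset.sum_add_distrib, e]
    simp only [Fin.castSucc_mk, Fin.succ_mk]
    rw [Finset.sum_eq_sum_Ico_succ_bot (show k + 1 < n + 3 by omega)
        (fun j => C.d (n + 1) j (z ⟨k + 1, by omega⟩)),
      Finset.sum_eq_sum_Ico_succ_bot (show k + 1 < n + 3 by omega)
        (fun j => C.d (n + 1) j (C.tail (n + 1) z (k + 1 + 1)))]
    simp only [Finset.sum_range_succ]
    have a := c2 (∑ j ∈ Finset.Ico (k + 1 + 1) (n + 3), C.d (n + 1) j (z ⟨k + 1, by omega⟩))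
    abel

/-- The contracting homotopy. -/
theorem homotopy_succ (n : ℕ) (z : C.PiX (n + 1)) (hz : C.bdPi n z = 0) :
    z = C.sg (n + 1) (C.ep (n + 1) z)
      + C.bdPi (n + 1) (C.spi (n + 2) (C.tail (n + 1) z)) := by
  funext p
  have hp : (p : ℕ) ≤ n + 1 := by omega
  rw [Pi.add_apply, bdPi_spi, C.tail_bd n p hp z, hz, C.tail_succ (n + 1) z p (by omega)]
  have e : C.tail n 0 p = 0 := by simp [tail]
  rw [e, zero_add, add_assoc (z _), c2, add_zero]
  have := c2 (C.s (n + 1) p (C.ep (n + 1) z))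
  simp only [sg, LinearMap.pi_apply]
  rw [add_comm (z _), ← add_assoc, this, zero_add]

theorem homotopy_zero (z : C.PiX 0) :
    z = C.sg 0 (C.ep 0 z) + C.bdPi 0 (C.spi 1 (C.tail 0 z)) := by
  funext p
  obtain rfl : p = 0 := Fin.eq_zero p
  rw [Pi.add_apply, bdPi_spi]
  have h0 : C.tail 0 z 0 = z 0 + C.tail 0 z 1 := C.tail_succ 0 z 0 (by omega)
  have h1 : C.tail 0 z 1 = 0 := C.tail_last 0 z 1 (by omega)
  simp [h0, h1, sg, ep]
  have := c2 (C.s 0 0 (C.d 0 1 (z 0)))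
  rw [add_comm (z 0), ← add_assoc, this]
  exact (zero_add (z 0)).symm

theorem bd_ep (n : ℕ) (z : C.PiX (n + 1)) : C.bd n (C.ep (n + 1) z) = C.ep n (C.bdPi n z) := by
  rw [ep, ep, bdPi_apply, bd, LinearMap.sum_apply]
  have e : Finset.Icc (((Fin.last n : Fin (n + 1)) : ℕ) + 1) (n + 2) = {n + 1, n + 2} := by
    ext; simp; omega
  rw [e, Finset.sum_pair (by omega), map_add, map_add, map_sum]
  have h1 := LinearMap.congr_fun (C.dd n (n + 1) (n + 2) (by omega) le_rfl) (z (Fin.last n).castSucc)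
  simp only [LinearMap.comp_apply] at h1
  rw [h1, show n + 2 - 1 = n + 1 by omega, c2, zero_add]
  refine Finset.sum_congr rfl fun i hi => ?_
  rw [Finset.mem_range, Fin.val_last] at hi
  have h2 := LinearMap.congr_fun (C.dd n i (n + 2) (by omega) le_rfl) (z (Fin.last (n + 1)))
  simp only [LinearMap.comp_apply] at h2
  exact h2

theorem tau_tau (n : ℕ) (z : C.PiX n) : C.tauPi n (C.tauPi n z) = z := by
  funext p
  rw [tauPi_apply, tauPi_apply, Fin.rev_rev, ← Module.End.mul_apply, ← pow_add, Fin.val_rev,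
    show (p : ℕ) + 1 + (n + 1 - (p + 1) + 1) = n + 1 + 1 by omega, C.t_ord']

theorem tau_bd (n : ℕ) (z : C.PiX (n + 1)) :
    C.bdPi n (C.tauPi (n + 1) z) = C.tauPi n (C.bdPi n z) := by
  funext p
  have hp : (p : ℕ) ≤ n := by omega
  rw [tauPi_apply, bdPi_apply, bdPi_apply, tauPi_apply, tauPi_apply, map_add, map_sum, map_sum,
    add_comm (Finset.sum (Finset.Icc (_ : ℕ) _) fun j => (C.t (n + 1) ^ _) _)]
  rw [Fin.rev_castSucc, Fin.rev_succ, Fin.val_castSucc, Fin.val_succ, Fin.val_rev]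
  have e : ∀ m, Finset.Icc m (n + 2) = Finset.Ico m (n + 3) := by
    intro m; ext; simp; omega
  rw [e, e, Finset.sum_Ico_eq_sum_range, Finset.sum_Ico_eq_sum_range]
  congr 1
  · refine Finset.sum_congr (by congr 1; omega) fun j hj => ?_
    rw [Finset.mem_range] at hj
    rw [C.d_t_le (n + 1) _ _ (by omega) (by omega), Nat.add_sub_cancel_left]
  · refine Finset.sum_congr (by congr 1; omega) fun j hj => ?_
    rw [Finset.mem_range] at hj
    rw [C.d_t_gt (n + 1) _ _ (by omega) (by omega) (by omega), Nat.add_sub_cancel]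
    congr 2
    congr 1
    omega

/-- Chains of a cycle through the successive columns of `CC`. -/
def IsCCChain (n R : ℕ) (y : ∀ i : ℕ, C.X (n + i)) : Prop :=
  ∀ i < R, (Even i → C.bd' (n + i) (y (i + 1)) = ∑ k ∈ Finset.range (n + i + 1), (C.t (n + i) ^ k) (y i)) ∧
    (¬ Even i → C.bd (n + i) (y (i + 1)) = y i + C.t (n + i) (y i))

/-- Chains through the successive columns of `Π`. -/
def IsPiChain (n R : ℕ) (z : ∀ i : ℕ, C.PiX (n + i)) : Prop :=
  ∀ i < R, C.bdPi (n + i) (z (i + 1)) = z i + C.tauPi (n + i) (z i)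

/-- Cycles in `Π`. -/
def cycPi : ∀ n : ℕ, C.PiX n → Prop
  | 0, _ => True
  | (m + 1), z => C.bdPi m z = 0

/-- The transfer. -/
def trans (n : ℕ) (y : ∀ i : ℕ, C.X (n + i)) : ∀ i : ℕ, C.PiX (n + i)
  | 0 => C.sg n (y 0)
  | (i + 1) => if Even i then C.f1 (n + i) (y i)
      else C.sg (n + i + 1) (y (i + 1)) + C.sg (n + i + 1) (C.sx (n + i) (y i))

theorem trans_chain (n R : ℕ) (y : ∀ i : ℕ, C.X (n + i)) (h0 : y 0 ∈ C.cyc n)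
    (hy : C.IsCCChain n R y) : C.IsPiChain n R (C.trans n y) := by
  intro i hi
  match i with
  | 0 =>
    simp only [trans, Even.zero, if_true]
    match n, y, h0 with
    | 0, y, _ => exact C.identB_zero (y 0)
    | (n + 1), y, h0 =>
      have h0' : C.bd n (y 0) = 0 := h0
      have := C.identB n (y 0)
      rw [h0'] at this
      have e : C.f1 n 0 = 0 := by funext p; simp [f1, spi, NN]
      rw [e, add_zero] at this
      exact this
  | i + 1 =>
    by_cases hE : Even i
    · have hE' : ¬ Even (i + 1) := by rw [Nat.even_add_one]; simpa using hE
      simp only [trans, hE, hE', if_true, if_false, map_add]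
      have h1 := (hy i (by omega)).1 hE
      have h2 := (hy (i + 1) hi).2 hE'
      have a := C.bdPi_sg (n + i + 1) (y (i + 2))
      have b := C.bdPi_sg (n + i + 1) (C.sx (n + i + 1) (y (i + 1)))
      have d := C.bd_sx (n + i) (y (i + 1))
      have e := C.identD (n + i) (y i)
      rw [h1] at d
      rw [d] at b
      have h2' : C.bd (n + i + 1) (y (i + 2)) = y (i + 1) + C.t (n + i + 1) (y (i + 1)) := h2
      rw [h2'] at a
      refine Eq.trans ?_ e.symm
      have g : ∀ u v : C.X (n + i + 1),
          C.sg (n + i + 1) u + C.sg (n + i + 1) (u + v) = C.sg (n + i + 1) v := fun u v => by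
        rw [map_add, ← add_assoc, c2, zero_add]
      exact (congrArg₂ (· + ·) a b).trans (g _ _)
    · have hE' : Even (i + 1) := by rw [Nat.even_add_one]; simpa using hE
      simp only [trans, hE, hE', if_true, if_false, map_add]
      have h1 := (hy i (by omega)).2 hE
      have a := C.identB (n + i) (y (i + 1))
      have b := C.identE (n + i) (y i)
      rw [h1, ← b] at a
      exact Eq.trans a (add_add_add_comm _ _ _ _)

theorem pi_chain (hCC : ∀ n, ∀ y ∈ C.cyc n, ∀ R, ∃ Y : ∀ i : ℕ, C.X (n + i), Y 0 = y ∧ C.IsCCChain n R Y)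
    (n : ℕ) (z : C.PiX n) (hz : C.cycPi n z) (R : ℕ) :
    ∃ Z : ∀ i : ℕ, C.PiX (n + i), Z 0 = z ∧ C.IsPiChain n R Z := by
  obtain ⟨w, hw, hc⟩ : ∃ w : C.PiX (n + 1), z = C.sg n (C.ep n z) + C.bdPi n w ∧
      C.ep n z ∈ C.cyc n := by
    match n, z, hz with
    | 0, z, _ => exact ⟨_, C.homotopy_zero z, trivial⟩
    | (n + 1), z, hz =>
      refine ⟨_, C.homotopy_succ n z hz, ?_⟩
      change C.bd n _ = 0
      rw [bd_ep, show C.bdPi n z = 0 from hz]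
      simp [ep]
  obtain ⟨Y, hY0, hY⟩ := hCC n _ hc R
  have hT := C.trans_chain n R Y (hY0 ▸ hc) hY
  let W : ∀ i : ℕ, C.PiX (n + i) := fun i => match i with
    | 0 => C.bdPi n w
    | 1 => w + C.tauPi (n + 1) w
    | (i + 2) => 0
  refine ⟨fun i => C.trans n Y i + W i, ?_, fun i hi => ?_⟩
  · change C.sg n (Y 0) + C.bdPi n w = z
    rw [hY0, ← hw]
  · rw [map_add, map_add, hT i hi]
    have : C.bdPi (n + i) (W (i + 1)) = W i + C.tauPi (n + i) (W i) := by
      match i with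
      | 0 =>
        change C.bdPi n (w + C.tauPi (n + 1) w) = C.bdPi n w + C.tauPi n (C.bdPi n w)
        rw [map_add, tau_bd]
      | 1 =>
        change C.bdPi (n + 1) 0 = w + C.tauPi (n + 1) w + C.tauPi (n + 1) (w + C.tauPi (n + 1) w)
        rw [map_add, tau_tau, map_zero, add_comm (C.tauPi _ _) w, c2]
      | (i + 2) =>
        change C.bdPi (n + (i + 2)) 0 = 0 + C.tauPi (n + (i + 2)) 0
        simp
    rw [this]
    exact add_add_add_comm _ _ _ _

end CycMod

theorem RelBicx.collapse_of (B : RelBicx (ZMod 2)) (hN : B.N = ⊥) (F : ℤ → ℤ → Submodule (ZMod 2) B.T)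
    (hF : ∀ p p' n, p ≤ p' → F p n ≤ F p' n)
    (h : ∀ p n : ℤ, ∀ x ∈ F p n, B.D x ∈ F (p - 1) (n - 1) → ∀ R : ℕ, ∃ z, x - z ∈ F (p - 1) n ∧
      B.D z ∈ F (p - R) (n - 1) ∧ B.D (B.D z) ∈ F (p - R) (n - 1 - 1)) :
    B.collapsesAt F 1 := by
  intro r hr p n
  rintro _ ⟨x, hx, rfl⟩
  simp only [RelBicx.Zpage, hN, sup_bot_eq] at hx ⊢
  obtain ⟨hx1, hx2⟩ := hx
  rw [SetLike.mem_coe, Submodule.mem_comap] at hx2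
  obtain ⟨z, h1, h2, h3⟩ := h p n x hx1 (hF _ _ _ (by omega) hx2) (2 * r + 1).toNat
  have e : ((2 * r + 1).toNat : ℤ) = 2 * r + 1 := Int.toNat_of_nonneg (by omega)
  rw [e] at h2 h3
  have e2 : B.D x = B.D (x - z) + B.D z := by rw [map_sub]; abel
  rw [e2]
  refine Submodule.add_mem_sup (Submodule.mem_map_of_mem ⟨h1, ?_⟩) ⟨?_, ?_⟩
  · rw [SetLike.mem_coe, Submodule.mem_comap, map_sub]
    exact Submodule.sub_mem _ (hF _ _ _ (by omega) hx2) (hF _ _ _ (by omega) h2)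
  · exact hF _ _ _ (by omega) h2
  · exact hF _ _ _ (by omega) h3

theorem RelBicx.of_collapse (B : RelBicx (ZMod 2)) (hN : B.N = ⊥) (F : ℤ → ℤ → Submodule (ZMod 2) B.T)
    (hc : B.collapsesAt F 1) (r : ℤ) (hr : 1 ≤ r) (p n : ℤ) (x : B.T) (hx : x ∈ F p n)
    (hD : B.D x ∈ F (p - r) (n - 1)) :
    ∃ x' ∈ F (p - 1) n, B.D x - B.D x' ∈ F (p - r - 1) (n - 1) := by
  have hz := hc r hr p n
  simp only [RelBicx.zeroDiff, RelBicx.Zpage, hN, sup_bot_eq] at hz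
  obtain ⟨_, ⟨x', hx', rfl⟩, w, hw, hs⟩ := Submodule.mem_sup.1 (hz (Submodule.mem_map_of_mem ⟨hx, hD⟩))
  exact ⟨x', hx'.1, by rw [← hs, add_sub_cancel_left]; exact hw.1⟩

namespace CycMod
variable (C : CycMod)

theorem mem_of_singles {ι : Type} [DecidableEq ι] {Y : ι → Type} [∀ i, AddCommGroup (Y i)]
    [∀ i, Module (ZMod 2) (Y i)] (P : Submodule (ZMod 2) (Π₀ i, Y i)) (x : Π₀ i, Y i)
    (h : ∀ i, x i ≠ 0 → DFinsupp.single i (x i) ∈ P) : x ∈ P := by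
  classical
  rw [← DFinsupp.sum_single (f := x)]
  refine Submodule.sum_mem _ fun i hi => h i ?_
  simpa using hi

/-- Elements supported on a set. -/
def suppOn {ι : Type} (Y : ι → Type) [∀ i, AddCommGroup (Y i)]
    [∀ i, Module (ZMod 2) (Y i)] (S : ι → Prop) : Submodule (ZMod 2) (Π₀ i, Y i) where
  carrier := {x | ∀ i, ¬ S i → x i = 0}
  add_mem' := fun ha hb i hi => by simp [ha i hi, hb i hi]
  zero_mem' := fun i _ => rfl
  smul_mem' := fun c x hx i hi => by simp [hx i hi]

theorem single_mem_suppOn {ι : Type} [DecidableEq ι] {Y : ι → Type} [∀ i, AddCommGroup (Y i)]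
    [∀ i, Module (ZMod 2) (Y i)] {S : ι → Prop} {i : ι} (hi : S i) (y : Y i) :
    (DFinsupp.single i y : Π₀ i, Y i) ∈ suppOn Y S := fun j hj =>
  DFinsupp.single_eq_of_ne (by rintro rfl; exact hj hi)

theorem suppOn_mono {ι : Type} {Y : ι → Type} [∀ i, AddCommGroup (Y i)]
    [∀ i, Module (ZMod 2) (Y i)] {S S' : ι → Prop} (h : ∀ i, S i → S' i) :
    suppOn Y S ≤ suppOn Y S' := fun _ hx i hi => hx i (fun hc => hi (h i hc))

theorem F_gen {ι : Type} [DecidableEq ι] {Y : ι → Type} [∀ i, AddCommGroup (Y i)]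
    [∀ i, Module (ZMod 2) (Y i)] (gr : ℤ → ℤ → Submodule (ZMod 2) (Π₀ i, Y i))
    (P Q : ι → ℤ) (S : ι → Prop)
    (h1 : ∀ p q, gr p q ≤ suppOn Y (fun a => S a ∧ P a = p ∧ Q a = q))
    (h2 : ∀ a, S a → ∀ y, (DFinsupp.single a y : Π₀ i, Y i) ∈ gr (P a) (Q a)) (p n : ℤ) :
    (⨆ (i : ℤ) (_ : i ≤ p), gr i (n - i)) = suppOn Y (fun a => S a ∧ P a ≤ p ∧ P a + Q a = n) := by
  apply le_antisymm
  · refine iSup_le fun i => iSup_le fun hi => (h1 _ _).trans (suppOn_mono fun a ha => ?_)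
    exact ⟨ha.1, by omega, by omega⟩
  · intro x hx
    refine mem_of_singles _ x fun a ha => ?_
    have h3 : S a ∧ P a ≤ p ∧ P a + Q a = n := by
      by_contra hc; exact ha (hx a hc)
    refine Submodule.mem_iSup_of_mem (P a) (Submodule.mem_iSup_of_mem h3.2.1 ?_)
    have e : n - P a = Q a := by omega
    rw [e]
    exact h2 a h3.1 _

/-- Total space of `CC`. -/
abbrev TC := Π₀ pq : ℕ × ℕ, C.X pq.2

/-- Total space of the `Π` bicomplexes. -/
abbrev TP := Π₀ pq : ℤ × ℕ, C.PiX pq.2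

def FC (p n : ℤ) : Submodule (ZMod 2) C.TC :=
  suppOn (fun pq : ℕ × ℕ => C.X pq.2) (fun a => True ∧ (a.1 : ℤ) ≤ p ∧ (a.1 : ℤ) + (a.2 : ℤ) = n)

def FP (hf : Prop) (p n : ℤ) : Submodule (ZMod 2) C.TP :=
  suppOn (fun pq : ℤ × ℕ => C.PiX pq.2) (fun a => (hf → 0 ≤ a.1) ∧ a.1 ≤ p ∧ a.1 + (a.2 : ℤ) = n)

theorem CC_F (p n : ℤ) : C.CC.Fcol p n = C.FC p n := by
  refine F_gen (Y := fun pq : ℕ × ℕ => C.X pq.2) (fun p q : ℤ => if 0 ≤ p ∧ 0 ≤ q then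
      Submodule.map (DFinsupp.lsingle (p.toNat, q.toNat)) ⊤
    else ⊥) (fun a => (a.1 : ℤ)) (fun a => (a.2 : ℤ)) (fun _ => True) ?_ ?_ p n
  · intro p q
    dsimp only
    split_ifs with h
    · rintro _ ⟨y, -, rfl⟩
      exact single_mem_suppOn ⟨trivial, by simp; omega, by simp; omega⟩ _
    · exact bot_le
  · intro a _ y
    dsimp only
    rw [if_pos (by omega)]
    exact ⟨y, trivial, rfl⟩

theorem Tate_F (p n : ℤ) : C.PiTate.Fcol p n = C.FP False p n := by
  refine F_gen (Y := fun pq : ℤ × ℕ => C.PiX pq.2) (fun p q : ℤ => if 0 ≤ q then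
      Submodule.map (DFinsupp.lsingle (p, q.toNat)) ⊤
    else ⊥) (fun a => a.1) (fun a => (a.2 : ℤ)) (fun a => False → 0 ≤ a.1) ?_ ?_ p n
  · intro p q
    dsimp only
    split_ifs with h
    · rintro _ ⟨y, -, rfl⟩
      exact single_mem_suppOn ⟨False.elim, rfl, by simp; omega⟩ _
    · exact bot_le
  · intro a _ y
    dsimp only
    rw [if_pos (by omega)]
    exact ⟨y, trivial, rfl⟩

theorem Zhalf_F (p n : ℤ) : C.PiZhalf.Fcol p n = C.FP True p n := by
  refine F_gen (Y := fun pq : ℤ × ℕ => C.PiX pq.2) (fun p q : ℤ => if 0 ≤ p ∧ 0 ≤ q then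
      Submodule.map (DFinsupp.lsingle (p, q.toNat)) ⊤
    else ⊥) (fun a => a.1) (fun a => (a.2 : ℤ)) (fun a => True → 0 ≤ a.1) ?_ ?_ p n
  · intro p q
    dsimp only
    split_ifs with h
    · rintro _ ⟨y, -, rfl⟩
      exact single_mem_suppOn ⟨fun _ => h.1, rfl, by simp; omega⟩ _
    · exact bot_le
  · intro a ha y
    dsimp only
    rw [if_pos (by have := ha trivial; omega)]
    exact ⟨y, trivial, rfl⟩

/-- The horizontal term. -/
def Hm (hf : Prop) [Decidable hf] (p : ℤ) (q : ℕ) (y : C.PiX q) : C.TP :=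
  if hf ∧ p ≤ 0 then 0 else DFinsupp.single (p - 1, q) (y + C.tauPi q y)

def Dspec (hf : Prop) [Decidable hf] (D : C.TP →ₗ[ZMod 2] C.TP) : Prop :=
  (∀ p y, D (DFinsupp.single (p, 0) y) = C.Hm hf p 0 y) ∧
  (∀ p q y, D (DFinsupp.single (p, q + 1) y) = C.Hm hf p (q + 1) y +
    DFinsupp.single (p, q) (C.bdPi q y))

theorem Tate_D : C.Dspec False C.PiTate.D := by
  have hd : C.PiTate.D = ((DFinsupp.lsum ℕ (fun pq : ℤ × ℕ =>
    ((DFinsupp.lsingle (pq.1 - 1, pq.2)).comp (LinearMap.id + C.tauPi pq.2) : C.PiX pq.2 →ₗ[ZMod 2] C.TP)) : C.TP →ₗ[ZMod 2] C.TP) +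
    (DFinsupp.lsum ℕ (fun pq : ℤ × ℕ =>
    (match pq with
    | (_, 0) => 0
    | (p, q + 1) => (DFinsupp.lsingle (p, q)).comp (C.bdPi q) : C.PiX pq.2 →ₗ[ZMod 2] C.TP)) : C.TP →ₗ[ZMod 2] C.TP) : C.TP →ₗ[ZMod 2] C.TP) := rfl
  constructor
  · intro p y
    rw [hd, LinearMap.add_apply, DFinsupp.lsum_single, DFinsupp.lsum_single, Hm, if_neg (by simp)]
    simp
  · intro p q y
    rw [hd, LinearMap.add_apply, DFinsupp.lsum_single, DFinsupp.lsum_single, Hm, if_neg (by simp)]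
    simp

theorem Zhalf_D : C.Dspec True C.PiZhalf.D := by
  have hd : C.PiZhalf.D = ((DFinsupp.lsum ℕ (fun pq : ℤ × ℕ =>
    (if pq.1 ≤ 0 then 0
    else (DFinsupp.lsingle (pq.1 - 1, pq.2)).comp (LinearMap.id + C.tauPi pq.2) : C.PiX pq.2 →ₗ[ZMod 2] C.TP)) : C.TP →ₗ[ZMod 2] C.TP) +
    (DFinsupp.lsum ℕ (fun pq : ℤ × ℕ =>
    (match pq with
    | (_, 0) => 0
    | (p, q + 1) => (DFinsupp.lsingle (p, q)).comp (C.bdPi q) : C.PiX pq.2 →ₗ[ZMod 2] C.TP)) : C.TP →ₗ[ZMod 2] C.TP) : C.TP →ₗ[ZMod 2] C.TP) := rfl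
  constructor
  · intro p y
    rw [hd, LinearMap.add_apply, DFinsupp.lsum_single, DFinsupp.lsum_single, Hm]
    by_cases h : p ≤ 0 <;> simp [h]
  · intro p q y
    rw [hd, LinearMap.add_apply, DFinsupp.lsum_single, DFinsupp.lsum_single, Hm]
    by_cases h : p ≤ 0 <;> simp [h]

theorem Hm_mem (hf : Prop) [Decidable hf] (p : ℤ) (q : ℕ) (y : C.PiX q) (p' n : ℤ)
    (h1 : p - 1 ≤ p') (h2 : p + q = n + 1) : C.Hm hf p q y ∈ C.FP hf p' n := by
  unfold Hm
  split_ifs with h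
  · exact Submodule.zero_mem _
  · refine single_mem_suppOn ⟨fun h' => ?_, h1, ?_⟩ _
    · have : ¬ p ≤ 0 := fun hc => h ⟨h', hc⟩
      change 0 ≤ p - 1
      omega
    · change p - 1 + (q : ℤ) = n
      omega

theorem D_mem (hf : Prop) [Decidable hf] (D : C.TP →ₗ[ZMod 2] C.TP) (hD : C.Dspec hf D)
    (p n : ℤ) (x : C.TP) (hx : x ∈ C.FP hf p n) : D x ∈ C.FP hf p (n - 1) := by
  change x ∈ Submodule.comap D (C.FP hf p (n - 1))
  refine mem_of_singles _ x fun a ha => ?_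
  have h1 : (hf → 0 ≤ a.1) ∧ a.1 ≤ p ∧ a.1 + (a.2 : ℤ) = n := by
    by_contra hc; exact ha (hx a hc)
  generalize x a = y at *
  obtain ⟨a, b⟩ := a
  dsimp only at h1
  change D _ ∈ C.FP hf p (n - 1)
  match b, y, h1 with
  | 0, y, h1 =>
    rw [hD.1]
    exact C.Hm_mem _ _ _ _ _ _ (by omega) (by omega)
  | (b + 1), y, h1 =>
    rw [hD.2]
    refine Submodule.add_mem _ (C.Hm_mem _ _ _ _ _ _ (by omega) (by omega)) ?_
    refine single_mem_suppOn ⟨h1.1, h1.2.1, ?_⟩ _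
    have := h1.2.2
    push_cast at this
    change a + (b : ℤ) = _
    omega

theorem single_congr (p p' : ℤ) (h : p = p') (q : ℕ) (y : C.PiX q) :
    (DFinsupp.single (p, q) y : C.TP) = DFinsupp.single (p', q) y := by subst h; rfl

theorem tele (hf : Prop) [Decidable hf] (D : C.TP →ₗ[ZMod 2] C.TP) (hD : C.Dspec hf D)
    (p : ℤ) (q R : ℕ) (Z : ∀ i : ℕ, C.PiX (q + i)) (h0 : C.cycPi q (Z 0)) (hZ : C.IsPiChain q R Z)
    (hR : ∀ k : ℕ, k < R → ¬ (hf ∧ p - k ≤ 0)) :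
    D (∑ k ∈ Finset.range (R + 1), DFinsupp.single (p - (k : ℤ), q + k) (Z k)) =
      C.Hm hf (p - R) (q + R) (Z R) := by
  suffices h : ∀ r ≤ R, D (∑ k ∈ Finset.range (r + 1), DFinsupp.single (p - (k : ℤ), q + k) (Z k)) =
      C.Hm hf (p - r) (q + r) (Z r) from h R le_rfl
  intro r
  induction r with
  | zero =>
    intro _
    rw [Finset.sum_range_one]
    match q, Z, h0 with
    | 0, Z, h0 => exact hD.1 _ _
    | (q + 1), Z, h0 =>
      have := hD.2 (p - ((0 : ℕ) : ℤ)) q (Z 0)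
      rw [show C.bdPi q (Z 0) = 0 from h0, DFinsupp.single_zero, add_zero] at this
      exact this
  | succ r ih =>
    intro hr
    rw [Finset.sum_range_succ, map_add, ih (by omega)]
    have e := hD.2 (p - ((r + 1 : ℕ) : ℤ)) (q + r) (Z (r + 1))
    rw [hZ r (by omega)] at e
    have e2 : D (DFinsupp.single (p - ((r + 1 : ℕ) : ℤ), q + (r + 1)) (Z (r + 1))) = _ := e
    rw [e2, Hm, if_neg (hR r (by omega)),
      C.single_congr (p - ((r + 1 : ℕ) : ℤ)) (p - r - 1) (by push_cast; ring), add_comm, add_assoc, c2, add_zero]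
    rfl

theorem pi_step (hf : Prop) [Decidable hf] (D : C.TP →ₗ[ZMod 2] C.TP) (hD : C.Dspec hf D)
    (hch : ∀ (n : ℕ) (z : C.PiX n), C.cycPi n z → ∀ R : ℕ,
      ∃ Z : ∀ i : ℕ, C.PiX (n + i), Z 0 = z ∧ C.IsPiChain n R Z)
    (p n : ℤ) (x : C.TP) (hx : x ∈ C.FP hf p n) (hDx : D x ∈ C.FP hf (p - 1) (n - 1)) (R : ℕ) :
    ∃ z : C.TP, x - z ∈ C.FP hf (p - 1) n ∧ D z ∈ C.FP hf (p - R) (n - 1) ∧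
      D (D z) ∈ C.FP hf (p - R) (n - 1 - 1) := by
  by_cases hp : (hf → 0 ≤ p) ∧ p ≤ n
  swap
  · refine ⟨0, ?_, by simp, by simp⟩
    rw [sub_zero]
    refine suppOn_mono (fun a ha => ?_) (show x ∈ suppOn _ (fun a => ((hf → 0 ≤ a.1) ∧ a.1 ≤ p ∧ a.1 + (a.2 : ℤ) = n)) from hx)
    refine ⟨ha.1, ?_, ha.2.2⟩
    rcases eq_or_ne a.1 p with h | h
    · exfalso
      rw [h] at ha
      exact hp ⟨ha.1, by omega⟩
    · omega
  obtain ⟨hp1, hp2⟩ := hp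
  obtain ⟨q, hq⟩ : ∃ q : ℕ, n = p + q := ⟨(n - p).toNat, by omega⟩
  have hx' : x - DFinsupp.single (p, q) (x (p, q)) ∈ C.FP hf (p - 1) n := by
    intro a ha
    by_cases h : a = (p, q)
    · subst h; simp
    · rw [DFinsupp.sub_apply, DFinsupp.single_eq_of_ne h, sub_zero]
      refine hx a fun hc => ha ⟨hc.1, ?_, hc.2.2⟩
      by_contra h'
      apply h
      have : a.1 = p := by omega
      ext
      · exact this
      · simp; omega
  have hcyc : C.cycPi q (x (p, q)) := by
    have h1 := Submodule.sub_mem _ hDx (C.D_mem hf D hD _ _ _ hx')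
    rw [map_sub, sub_sub_cancel] at h1
    generalize x (p, q) = y at h1 
    match q, y, h1 with
    | 0, y, h1 => trivial
    | (q + 1), y, h1 =>
      rw [hD.2] at h1
      have h2 := h1 (p, q) (by simp)
      have h3 : C.Hm hf p (q + 1) y (p, q) = 0 := by
        unfold Hm
        split_ifs
        · rfl
        · exact DFinsupp.single_eq_of_ne (by simp)
      rw [DFinsupp.add_apply, h3, DFinsupp.single_eq_same, zero_add] at h2
      exact h2
  obtain ⟨Z, hZ0, hZ⟩ := hch q _ hcyc R
  obtain ⟨R', hR1, hR2, hR3⟩ : ∃ R' : ℕ, R' ≤ R ∧ (∀ k : ℕ, k < R' → ¬ (hf ∧ p - k ≤ 0)) ∧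
      (R' = R ∨ (hf ∧ p - R' ≤ 0)) := by
    by_cases h : hf ∧ p ≤ R
    · refine ⟨p.toNat, by omega, fun k hk => by omega, Or.inr ⟨h.1, by omega⟩⟩
    · refine ⟨R, le_rfl, fun k hk hc => h ⟨hc.1, by omega⟩, Or.inl rfl⟩
  have ht := C.tele hf D hD p q R' Z (by rw [hZ0]; exact hcyc) (fun i hi => hZ i (by omega)) hR2
  have hm : C.Hm hf (p - R') (q + R') (Z R') ∈ C.FP hf (p - R) (n - 1) := by
    rcases hR3 with h | h
    · exact C.Hm_mem _ _ _ _ _ _ (by omega) (by push_cast; omega)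
    · rw [Hm, if_pos h]
      exact Submodule.zero_mem _
  refine ⟨_, ?_, by rw [ht]; exact hm, by rw [ht]; exact C.D_mem hf D hD _ _ _ hm⟩
  rw [Finset.sum_range_succ', add_comm, ← sub_sub]
  refine Submodule.sub_mem _ ?_ (Submodule.sum_mem _ fun k hk => single_mem_suppOn ?_ _)
  · rw [hZ0, C.single_congr (p - ((0 : ℕ) : ℤ)) p (by simp)]
    exact hx'
  · have hk' := Finset.mem_range.1 hk
    refine ⟨fun h => ?_, ?_, ?_⟩
    · have := hR2 k hk'
      change 0 ≤ p - ((k + 1 : ℕ) : ℤ)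
      have h5 : ¬ p - k ≤ 0 := fun hc => this ⟨h, hc⟩
      push_cast
      omega
    · change p - ((k + 1 : ℕ) : ℤ) ≤ _
      push_cast
      omega
    · change p - ((k + 1 : ℕ) : ℤ) + ((q + (k + 1) : ℕ) : ℤ) = _
      push_cast
      omega

/-- Total differential of `CC`. -/
def CD : C.TC →ₗ[ZMod 2] C.TC := C.CC.D

/-- Total differential of `CC`, pointwise. -/
theorem CC_D_apply (x : C.TC) (a b : ℕ) : C.CD x (a, b) =
    (if Even a then LinearMap.id + C.t b else ∑ i ∈ Finset.range (b + 1), (C.t b) ^ i) (x (a + 1, b))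
    + (if Even a then C.bd b else C.bd' b) (x (a, b + 1)) := by
  have hd : C.CD = ((DFinsupp.lsum ℕ (fun pq : ℕ × ℕ =>
    (match pq with
    | (0, _) => 0
    | (p + 1, q) =>
      (DFinsupp.lsingle (p, q)).comp
        (if Even p then LinearMap.id + C.t q
         else ∑ i ∈ Finset.range (q + 1), (C.t q) ^ i) : C.X pq.2 →ₗ[ZMod 2] C.TC)) : C.TC →ₗ[ZMod 2] C.TC) +
    (DFinsupp.lsum ℕ (fun pq : ℕ × ℕ =>
    (match pq with
    | (_, 0) => 0
    | (p, q + 1) =>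
      (DFinsupp.lsingle (p, q)).comp (if Even p then C.bd q else C.bd' q) : C.X pq.2 →ₗ[ZMod 2] C.TC)) : C.TC →ₗ[ZMod 2] C.TC) : C.TC →ₗ[ZMod 2] C.TC) := rfl
  rw [hd, LinearMap.add_apply, DFinsupp.add_apply]
  congr 1
  · induction x using DFinsupp.induction with
    | h0 => simp
    | ha i y f _ _ ih =>
      rw [map_add, DFinsupp.add_apply, ih, DFinsupp.add_apply, map_add]
      congr 1
      rw [DFinsupp.lsum_single]
      obtain ⟨p, q⟩ := i
      match p, y with
      | 0, y =>
        rw [DFinsupp.single_eq_of_ne (by simp), map_zero]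
        rfl
      | (p + 1), y =>
        by_cases h : (p, q) = (a, b)
        · obtain ⟨rfl, rfl⟩ := Prod.mk.inj h
          rw [DFinsupp.single_eq_same]
          exact DFinsupp.single_eq_same
        · rw [DFinsupp.single_eq_of_ne (i := (p + 1, q)) (i' := (a + 1, b)) (by simp_all; tauto), map_zero]
          exact DFinsupp.single_eq_of_ne (Ne.symm h)
  · induction x using DFinsupp.induction with
    | h0 => simp
    | ha i y f _ _ ih =>
      rw [map_add, DFinsupp.add_apply, ih, DFinsupp.add_apply, map_add]
      congr 1
      rw [DFinsupp.lsum_single]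
      obtain ⟨p, q⟩ := i
      match q, y with
      | 0, y =>
        rw [DFinsupp.single_eq_of_ne (by simp), map_zero]
        rfl
      | (q + 1), y =>
        by_cases h : (p, q) = (a, b)
        · obtain ⟨rfl, rfl⟩ := Prod.mk.inj h
          rw [DFinsupp.single_eq_same]
          exact DFinsupp.single_eq_same
        · rw [DFinsupp.single_eq_of_ne (i := (p, q + 1)) (i' := (a, b + 1)) (by simp_all; tauto), map_zero]
          exact DFinsupp.single_eq_of_ne (Ne.symm h)

theorem hCC_lift (hdeg : C.HdRdegenAt 1) (n : ℕ) (y : C.X n) (hy : y ∈ C.cyc n) (R r : ℕ) :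
    ∃ x : C.TC, x ∈ C.FC (2 * R : ℕ) ((2 * R : ℕ) + n) ∧
      C.CD x ∈ C.FC ((2 * R : ℕ) - (r + 1 : ℕ)) ((2 * R : ℕ) + n - 1) ∧ x (2 * R, n) = y := by
  induction r with
  | zero =>
    refine ⟨DFinsupp.single (2 * R, n) y, single_mem_suppOn ⟨trivial, le_rfl, rfl⟩ _, ?_,
      DFinsupp.single_eq_same⟩
    rintro ⟨a, b⟩ hab
    rw [CC_D_apply]
    dsimp only at hab
    rw [DFinsupp.single_eq_of_ne (i' := (a + 1, b)), map_zero, zero_add]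
    · by_cases h : (a, b + 1) = (2 * R, n)
      · obtain ⟨rfl, rfl⟩ := Prod.mk.inj h
        rw [DFinsupp.single_eq_same, if_pos (by simp)]
        exact hy
      · rw [DFinsupp.single_eq_of_ne h, map_zero]
    · intro h
      obtain ⟨h1, h2⟩ := Prod.mk.inj h
      apply hab
      refine ⟨trivial, ?_, ?_⟩ <;> push_cast <;> omega
  | succ r ih =>
    obtain ⟨x, hx1, hx2, hx3⟩ := ih
    obtain ⟨x', hx', hw⟩ : ∃ x' : C.TC, x' ∈ C.FC ((2 * R : ℕ) - 1) ((2 * R : ℕ) + n) ∧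
        C.CD x - C.CD x' ∈ C.FC ((2 * R : ℕ) - (r + 1 : ℕ) - 1) ((2 * R : ℕ) + n - 1) := by
      have := RelBicx.of_collapse C.CC rfl _ hdeg (r + 1 : ℕ) (by push_cast; omega) (2 * R : ℕ) ((2 * R : ℕ) + n) x
      rw [CC_F, CC_F, CC_F, CC_F] at this
      exact this hx1 hx2
    refine ⟨x - x', Submodule.sub_mem _ hx1 ?_, ?_, ?_⟩
    · exact suppOn_mono (fun a ha => ⟨ha.1, by omega, ha.2.2⟩) hx'
    · rw [map_sub]
      exact suppOn_mono (fun a ha => ⟨ha.1, by push_cast at *; omega, ha.2.2⟩) hw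
    · rw [DFinsupp.sub_apply]
      rw [hx3, show (x' : C.TC) (2 * R, n) = 0 from hx' _ (by simp), sub_zero]

theorem hCC (hdeg : C.HdRdegenAt 1) (n : ℕ) (y : C.X n) (hy : y ∈ C.cyc n) (R : ℕ) :
    ∃ Y : ∀ i : ℕ, C.X (n + i), Y 0 = y ∧ C.IsCCChain n R Y := by
  obtain ⟨x, hx1, hx2, hx3⟩ := C.hCC_lift hdeg n y hy R (2 * R)
  have hD : ∀ a b : ℕ, C.CD x (a, b) = 0 := fun a b =>
    hx2 (a, b) (by rintro ⟨-, h, -⟩; dsimp only at h; push_cast at h; omega)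
  refine ⟨fun i => x (2 * R - i, n + i), hx3, fun i hi => ?_⟩
  have h := hD (2 * R - (i + 1)) (n + i)
  rw [CC_D_apply] at h
  have e : 2 * R - (i + 1) + 1 = 2 * R - i := by omega
  rw [e] at h
  have h' := (eq_neg_of_add_eq_zero_right h).trans (ZModModule.neg_eq_self _)
  constructor
  · intro hev
    have : ¬ Even (2 * R - (i + 1)) := by
      rw [Nat.even_iff] at *; omega
    rw [if_neg this, if_neg this, LinearMap.sum_apply] at h'
    exact h'
  · intro hev
    have : Even (2 * R - (i + 1)) := by
      rw [Nat.even_iff] at *; omega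
    rw [if_pos this, if_pos this] at h'
    exact h'

theorem FP_mono (hf : Prop) (p p' n : ℤ) (h : p ≤ p') : C.FP hf p n ≤ C.FP hf p' n :=
  suppOn_mono fun _ ha => ⟨ha.1, ha.2.1.trans h, ha.2.2⟩

end CycMod

/-- **Proposition 3.28.** Let `𝓜` be a bounded cyclic module over `𝔽₂` whose Hodge-to-de
Rham spectral sequence degenerates at the first page. Then the spectral sequence `ᵛʰE`
(first taking homology with respect to `∂_Π`) attached to each of the bicomplexes `Π^{ℤ/2}`
and `Π^{Tate}` also degenerates at the first page. -/
theorem pi_bicomplexes_degenerate (C : CycMod) (hbdd : C.Bounded)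
    (hdeg : C.HdRdegenAt 1) :
    C.PiZhalf.collapsesAt C.PiZhalf.Fcol 1 ∧
    C.PiTate.collapsesAt C.PiTate.Fcol 1 := by
  have hch := C.pi_chain (C.hCC hdeg)
  constructor
  · refine RelBicx.collapse_of _ rfl _ ?_ ?_
    · intro p p' n h
      rw [C.Zhalf_F, C.Zhalf_F]
      exact C.FP_mono True p p' n h
    · simp only [C.Zhalf_F]
      exact C.pi_step True C.PiZhalf.D C.Zhalf_D hch
  · refine RelBicx.collapse_of _ rfl _ ?_ ?_
    · intro p p' n h
      rw [C.Tate_F, C.Tate_F]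
      exact C.FP_mono False p p' n h
    · simp only [C.Tate_F]
      exact C.pi_step False C.PiTate.D C.Tate_D hch
end LT
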